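/- Let γ > 0 and let u be a decaying classical solution of the Ostrovsky–Hunter equation on the line on [0,T) with initial data u₀ ∈ L¹(ℝ) ∩ L²(ℝ) ∩ L∞(ℝ), with v(t,x) = ∫_{−∞}^x u(t,y) dy square-integrable and v(t,±∞) = 0, and set Q = ∫_ℝ u₀² dx, E = ∫_ℝ [ γ (∫_{−∞}^x u₀)² + (1/3) u₀³ ] dx, and C = (√γ/√2) ( E + γ Q + (1/3) Q ‖u₀‖_{L∞} )^{1/2}. Then sup_{s∈[0,t]} sup_{x∈ℝ} |u(s,x)| ≤ ‖u₀‖_{L∞} + C t + (γ Q/6) t² for every t ∈ [0,T). -/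

import Mathlib

open MeasureTheory Filter Set intervalIntegral

/-- A decaying classical solution of the Ostrovsky–Hunter equation on the line,
on the set `S` of times (typically `[0,T)`): `u` is continuously differentiable
in `t`, twice continuously differentiable in `x`, integrable in `x` for each
time, and with `v(t,x) = ∫_{-∞}^x u(t,y) dy` the nonlocal equation
`u_t + u u_x = γ v` holds pointwise at positive times of `S`. -/
structure IsLineOHSolution (γ : ℝ) (S : Set ℝ) (u : ℝ → ℝ → ℝ) : Prop where
  diff_t : ∀ t ∈ S, ∀ x : ℝ, DifferentiableAt ℝ (fun s => u s x) t
  diff_x : ∀ t ∈ S, ∀ x : ℝ, DifferentiableAt ℝ (u t) x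
  diff_xx : ∀ t ∈ S, ∀ x : ℝ, DifferentiableAt ℝ (deriv (u t)) x
  cont_u : ContinuousOn (fun p : ℝ × ℝ => u p.1 p.2) (S ×ˢ (Set.univ : Set ℝ))
  cont_ut : ContinuousOn (fun p : ℝ × ℝ => deriv (fun s => u s p.2) p.1)
      (S ×ˢ (Set.univ : Set ℝ))
  cont_ux : ContinuousOn (fun p : ℝ × ℝ => deriv (u p.1) p.2) (S ×ˢ (Set.univ : Set ℝ))
  cont_uxx : ContinuousOn (fun p : ℝ × ℝ => deriv (deriv (u p.1)) p.2)
      (S ×ˢ (Set.univ : Set ℝ))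
  integrable : ∀ t ∈ S, MeasureTheory.Integrable (u t)
  eqn : ∀ t ∈ S, 0 < t → ∀ x : ℝ,
    deriv (fun s => u s x) t + u t x * deriv (u t) x = γ * ∫ y in Set.Iic x, u t y


open MeasureTheory Filter Set intervalIntegral

lemma oh_chain {W Wx : ℝ → ℝ → ℝ} (cWx : Continuous (fun p : ℝ × ℝ => Wx p.1 p.2))
    (dx : ∀ t x, HasDerivAt (W t) (Wx t x) x) {s : Set ℝ} {t X' wt : ℝ} {X : ℝ → ℝ}
    (hX : HasDerivWithinAt X X' s t)
    (hW : HasDerivWithinAt (fun r => W r (X t)) wt s t) :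
    HasDerivWithinAt (fun r => W r (X r)) (wt + Wx t (X t) * X') s t := by
  set z := X t with hz
  let B : ℝ × ℝ → ℝ := fun p => ∫ θ in (0:ℝ)..1, Wx p.1 (z + θ * (p.2 - z))
  have cB : Continuous B := by
    apply intervalIntegral.continuous_parametric_intervalIntegral_of_continuous'
    have : Continuous (fun q : (ℝ × ℝ) × ℝ => ((q.1.1, z + q.2 * (q.1.2 - z)) : ℝ × ℝ)) := by
      fun_prop
    exact cWx.comp this
  have hB : ∀ r y, W r y - W r z = B (r, y) * (y - z) := by
    intro r y
    have h1 : ∀ θ ∈ Set.uIcc (0:ℝ) 1, HasDerivAt (fun θ => W r (z + θ * (y - z)))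
        (Wx r (z + θ * (y - z)) * (y - z)) θ := by
      intro θ _
      have h2 : HasDerivAt (fun θ : ℝ => z + θ * (y - z)) (y - z) θ := by
        simpa using ((hasDerivAt_id θ).mul_const (y - z)).const_add z
      exact (dx r _).comp θ h2
    have h3 := intervalIntegral.integral_eq_sub_of_hasDerivAt h1 (by
      apply Continuous.intervalIntegrable
      have : Continuous (fun θ : ℝ => ((r, z + θ * (y - z)) : ℝ × ℝ)) := by fun_prop
      exact (cWx.comp this).mul continuous_const)
    rw [intervalIntegral.integral_mul_const] at h3
    simp at h3
    simp only [B]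
    rw [h3]
  have hBt : B (t, z) = Wx t z := by simp [B]
  have hg : HasDerivWithinAt (fun r => W r (X r) - W r z) (Wx t z * X') s t := by
    have hXc := hX.continuousWithinAt
    rw [hasDerivWithinAt_iff_tendsto_slope] at hX ⊢
    have h4 : Tendsto (fun r => B (r, X r)) (nhdsWithin t (s \ {t})) (nhds (Wx t z)) := by
      rw [← hBt]
      have h5 : ContinuousWithinAt (fun r => B (r, X r)) s t :=
        cB.continuousAt.comp_continuousWithinAt (continuousWithinAt_id.prodMk hXc)
      exact h5.mono_left (nhdsWithin_mono _ sdiff_subset)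
    refine (h4.mul hX).congr' ?_
    filter_upwards with r
    simp only [slope, vsub_eq_sub, smul_eq_mul]
    rw [hB, hB, ← hz]; ring
  have := hW.add hg
  refine this.congr_of_eventuallyEq ?_ ?_
  · filter_upwards with r
    simp
  · simp

lemma oh_char {W Wx Wt : ℝ → ℝ → ℝ} {a b : ℝ} (hab : a ≤ b)
    (cW : Continuous (fun p : ℝ × ℝ => W p.1 p.2))
    (cWx : Continuous (fun p : ℝ × ℝ => Wx p.1 p.2))
    (dx : ∀ t x, HasDerivAt (W t) (Wx t x) x)
    (dt : ∀ t ∈ Icc a b, ∀ x, HasDerivWithinAt (fun s => W s x) (Wt t x) (Icc a b) t)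
    {G : ℝ} (hG : ∀ t ∈ Icc a b, ∀ x, |Wt t x + W t x * Wx t x| ≤ G) (x0 : ℝ) :
    ∃ X : ℝ → ℝ, X a = x0 ∧ (∀ t ∈ Icc a b, HasDerivWithinAt X (W t (X t)) (Icc a b) t) ∧
      ∀ t ∈ Icc a b, |W t (X t) - W a x0| ≤ G * (t - a) := by
  have hG0 : 0 ≤ G := (abs_nonneg _).trans (hG a ⟨le_refl _, hab⟩ 0)
  set m : ℝ := |W a x0| + (G + 1) * (b - a) + 1 with hm
  have hm0 : 0 < m := by
    have : 0 ≤ (G + 1) * (b - a) := mul_nonneg (by linarith) (by linarith)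
    have := abs_nonneg (W a x0)
    linarith
  let f : ℝ → ℝ → ℝ := fun t x => max (-m) (min m (W t x))
  have hfm : ∀ t x, |f t x| ≤ m := by
    intro t x
    rw [abs_le]
    refine ⟨le_max_left _ _, max_le (by linarith) (min_le_left _ _)⟩
  have hfW : ∀ t x, |W t x| ≤ m → f t x = W t x := by
    intro t x h
    rw [abs_le] at h
    simp only [f]
    rw [min_eq_right h.2, max_eq_right h.1]
  set R : ℝ := m * (b - a) with hR
  have hR0 : 0 ≤ R := mul_nonneg hm0.le (by linarith)
  have hK : IsCompact (Icc a b ×ˢ Metric.closedBall x0 R) :=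
    isCompact_Icc.prod (isCompact_closedBall _ _)
  obtain ⟨L, hL⟩ := hK.exists_bound_of_continuousOn cWx.continuousOn
  have hL' : ∀ t ∈ Icc a b, ∀ x ∈ Metric.closedBall x0 R, ‖Wx t x‖ ≤ L.toNNReal := by
    intro t ht x hx
    exact (hL (t, x) ⟨ht, hx⟩).trans (Real.le_coe_toNNReal L)
  have hlip : ∀ t ∈ Icc a b, LipschitzOnWith L.toNNReal (W t) (Metric.closedBall x0 R) := by
    intro t ht
    apply (convex_closedBall x0 R).lipschitzOnWith_of_nnnorm_hasDerivWithin_le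
      (f' := Wx t) (fun x _ => (dx t x).hasDerivWithinAt)
    intro x hx
    exact_mod_cast hL' t ht x hx
  have hpl : IsPicardLindelof f (tmin := a) (tmax := b) ⟨a, le_refl _, hab⟩ x0
      R.toNNReal 0 m.toNNReal L.toNNReal := by
    constructor
    · intro t ht
      rw [Real.coe_toNNReal _ hR0]
      have h1 : LipschitzWith 1 (fun y : ℝ => max (-m) (min m y)) := by
        have h2 := (LipschitzWith.id (α := ℝ)).const_min m
        exact h2.const_max (-m)
      have h3 := h1.comp_lipschitzOnWith (hlip t ht)
      rw [one_mul] at h3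
      exact h3
    · intro x _
      have : Continuous (fun t => f t x) := by
        have : Continuous (fun t => W t x) := cW.comp (by fun_prop : Continuous fun t : ℝ => (t, x))
        exact continuous_const.max (continuous_const.min this)
      exact this.continuousOn
    · intro t _ x _
      rw [Real.coe_toNNReal _ hm0.le]
      exact hfm t x
    · rw [Real.coe_toNNReal _ hm0.le, Real.coe_toNNReal _ hR0]
      simp [hR, max_eq_left (sub_nonneg.2 hab)]
  obtain ⟨X, hX0, hX⟩ := hpl.exists_eq_forall_mem_Icc_hasDerivWithinAt₀
  simp only at hX0
  have hd : ∀ t ∈ Icc a b, HasDerivWithinAt (fun r => W r (X r))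
      (Wt t (X t) + Wx t (X t) * f t (X t)) (Icc a b) t :=
    fun t ht => oh_chain cWx dx (hX t ht) (dt t ht (X t))
  have hcont : ContinuousOn (fun r => W r (X r)) (Icc a b) := fun t ht => (hd t ht).continuousWithinAt
  have hfence := image_norm_le_of_norm_deriv_right_lt_deriv_boundary (a := a) (b := b)
    (f := fun r => W r (X r))
    (f' := fun t => Wt t (X t) + Wx t (X t) * f t (X t))
    hcont (fun t ht => (hd t (Ico_subset_Icc_self ht)).mono_of_mem_nhdsWithin
      (Icc_mem_nhdsGE_of_mem ht))
    (B := fun t => |W a x0| + (G + 1) * (t - a)) (B' := fun _ => G + 1)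
    (by simp [hX0]) (by
      intro t
      simpa using (((hasDerivAt_id t).sub_const a).const_mul (G + 1)).const_add (|W a x0|)) (by
      intro t ht he
      have hle : |W t (X t)| ≤ m := by
        rw [Real.norm_eq_abs] at he
        rw [he, hm]
        have : (G + 1) * (t - a) ≤ (G + 1) * (b - a) := by
          apply mul_le_mul_of_nonneg_left _ (by linarith); linarith [ht.2]
        linarith
      rw [hfW _ _ hle, Real.norm_eq_abs, mul_comm]
      linarith [hG t (Ico_subset_Icc_self ht) (X t)])
  have hle : ∀ t ∈ Icc a b, f t (X t) = W t (X t) := by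
    intro t ht
    apply hfW
    have h1 := hfence ht
    simp only [Real.norm_eq_abs] at h1
    have : (G + 1) * (t - a) ≤ (G + 1) * (b - a) := by
      apply mul_le_mul_of_nonneg_left _ (by linarith); linarith [ht.2]
    linarith
  refine ⟨X, hX0, fun t ht => hle t ht ▸ hX t ht, ?_⟩
  have h5 := norm_image_sub_le_of_norm_deriv_right_le_segment (a := a) (b := b)
    (f := fun r => W r (X r))
    (f' := fun t => Wt t (X t) + Wx t (X t) * f t (X t)) (C := G)
    hcont (fun t ht => (hd t (Ico_subset_Icc_self ht)).mono_of_mem_nhdsWithin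
      (Icc_mem_nhdsGE_of_mem ht)) (by
      intro t ht
      have ht' := Ico_subset_Icc_self ht
      rw [hle t ht', Real.norm_eq_abs, mul_comm]
      exact hG t ht' (X t))
  intro t ht
  have := h5 t ht
  simpa [hX0, Real.norm_eq_abs] using this

/-- reflected version: characteristic through a point at the final time. -/
lemma oh_char_back {W Wx Wt : ℝ → ℝ → ℝ} {a b : ℝ} (hab : a ≤ b)
    (cW : Continuous (fun p : ℝ × ℝ => W p.1 p.2))
    (cWx : Continuous (fun p : ℝ × ℝ => Wx p.1 p.2))
    (dx : ∀ t x, HasDerivAt (W t) (Wx t x) x)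
    (dt : ∀ t ∈ Icc a b, ∀ x, HasDerivWithinAt (fun s => W s x) (Wt t x) (Icc a b) t)
    {G : ℝ} (hG : ∀ t ∈ Icc a b, ∀ x, |Wt t x + W t x * Wx t x| ≤ G) (x0 : ℝ) :
    ∃ y : ℝ, |W a y - W b x0| ≤ G * (b - a) := by
  have hmem : ∀ t ∈ Icc (-b) (-a), -t ∈ Icc a b := fun t ht => ⟨by linarith [ht.2], by linarith [ht.1]⟩
  obtain ⟨X, -, -, h3⟩ := oh_char (W := fun t x => - W (-t) x) (Wx := fun t x => - Wx (-t) x)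
    (Wt := fun t x => Wt (-t) x) (a := -b) (b := -a) (G := G) (by linarith)
    (cW.comp (by fun_prop : Continuous fun p : ℝ × ℝ => (-p.1, p.2))).neg
    (cWx.comp (by fun_prop : Continuous fun p : ℝ × ℝ => (-p.1, p.2))).neg
    (fun t x => (dx (-t) x).neg)
    (by
      intro t ht x
      have h1 := dt (-t) (hmem t ht) x
      have h2 : HasDerivWithinAt (fun s : ℝ => -s) (-1) (Icc (-b) (-a)) t :=
        (hasDerivAt_neg t).hasDerivWithinAt
      have h3 := (HasDerivWithinAt.comp t h1 h2 hmem).fun_neg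
      simpa [Function.comp_def] using h3)
    (by
      intro t ht x
      have := hG (-t) (hmem t ht) x
      simpa using this) x0
  refine ⟨X (-a), ?_⟩
  have := h3 (-a) ⟨by linarith, le_refl _⟩
  simp only [neg_neg] at this
  rw [show W a (X (-a)) - W b x0 = -(-W a (X (-a)) - -W b x0) by ring, abs_neg]
  linarith

/-- characteristics do not cross -/
lemma oh_noncross {W Wx Wt : ℝ → ℝ → ℝ} {a b : ℝ} (hab : a ≤ b)
    (cW : Continuous (fun p : ℝ × ℝ => W p.1 p.2))
    (cWx : Continuous (fun p : ℝ × ℝ => Wx p.1 p.2))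
    (dx : ∀ t x, HasDerivAt (W t) (Wx t x) x)
    (dt : ∀ t ∈ Icc a b, ∀ x, HasDerivWithinAt (fun s => W s x) (Wt t x) (Icc a b) t)
    {G : ℝ} (hG : ∀ t ∈ Icc a b, ∀ x, |Wt t x + W t x * Wx t x| ≤ G) {x y : ℝ} (hxy : x ≤ y) :
    (b - a) * (W a x - W a y) ≤ (y - x) + 2 * G * (b - a) ^ 2 := by
  have hG0 : 0 ≤ G := (abs_nonneg _).trans (hG a ⟨le_refl _, hab⟩ 0)
  rcases hxy.eq_or_lt with rfl | hlt
  · simp; positivity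
  obtain ⟨X, hX0, hX, hXb⟩ := oh_char hab cW cWx dx dt hG x
  obtain ⟨Y, hY0, hY, hYb⟩ := oh_char hab cW cWx dx dt hG y
  have cX : ContinuousOn X (Icc a b) := fun t ht => (hX t ht).continuousWithinAt
  have cY : ContinuousOn Y (Icc a b) := fun t ht => (hY t ht).continuousWithinAt
  -- noncrossing
  have hXY : X b ≤ Y b := by
    by_contra hcon
    push Not at hcon
    have h0 : (0:ℝ) ∈ (fun t => X t - Y t) '' Icc a b := by
      apply intermediate_value_Icc hab (cX.sub cY)
      simp only [mem_Icc, Pi.sub_apply]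
      constructor <;> linarith
    obtain ⟨s, hs, hs0⟩ := h0
    simp only at hs0
    have hsub : Icc a s ⊆ Icc a b := Icc_subset_Icc_right hs.2
    obtain ⟨R1, hR1⟩ := isCompact_Icc.exists_bound_of_continuousOn cX
    obtain ⟨R2, hR2⟩ := isCompact_Icc.exists_bound_of_continuousOn cY
    set R := max R1 R2
    have hK : IsCompact (Icc a b ×ˢ Metric.closedBall (0:ℝ) R) :=
      isCompact_Icc.prod (isCompact_closedBall _ _)
    obtain ⟨L, hL⟩ := hK.exists_bound_of_continuousOn cWx.continuousOn
    have hL' : ∀ t ∈ Icc a b, ∀ x ∈ Metric.closedBall (0:ℝ) R, ‖Wx t x‖ ≤ L.toNNReal := by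
      intro t ht x hx
      exact (hL (t, x) ⟨ht, hx⟩).trans (Real.le_coe_toNNReal L)
    have hlip : ∀ t ∈ Icc a b, LipschitzOnWith L.toNNReal (W t) (Metric.closedBall 0 R) := by
      intro t ht
      apply (convex_closedBall 0 R).lipschitzOnWith_of_nnnorm_hasDerivWithin_le
        (f' := Wx t) (fun x _ => (dx t x).hasDerivWithinAt)
      intro x hx
      exact_mod_cast hL' t ht x hx
    have hu := ODE_solution_unique_of_mem_Icc_left (a := a) (b := s) (f := X) (g := Y) (v := W)
      (s := fun _ => Metric.closedBall 0 R) (K := L.toNNReal)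
      (fun t ht => hlip t (hsub (Ioc_subset_Icc_self ht)))
      (cX.mono hsub)
      (fun t ht => ((hX t (hsub (Ioc_subset_Icc_self ht))).mono hsub).mono_of_mem_nhdsWithin
        (Icc_mem_nhdsLE_of_mem ht))
      (fun t ht => by
        simp only [Metric.mem_closedBall, dist_zero_right]
        exact (hR1 t (hsub (Ioc_subset_Icc_self ht))).trans (le_max_left _ _))
      (cY.mono hsub)
      (fun t ht => ((hY t (hsub (Ioc_subset_Icc_self ht))).mono hsub).mono_of_mem_nhdsWithin
        (Icc_mem_nhdsLE_of_mem ht))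
      (fun t ht => by
        simp only [Metric.mem_closedBall, dist_zero_right]
        exact (hR2 t (hsub (Ioc_subset_Icc_self ht))).trans (le_max_right _ _))
      (by linarith)
    have := hu ⟨le_refl _, hs.1⟩
    rw [hX0, hY0] at this
    linarith
  -- derivative of X - Y - (difference of velocities) t
  have hd : ∀ t ∈ Icc a b, HasDerivWithinAt (fun t => (Y t - X t) - (W a y - W a x) * t)
      ((W t (Y t) - W t (X t)) - (W a y - W a x)) (Icc a b) t := by
    intro t ht
    have h1 : HasDerivWithinAt (fun t => (W a y - W a x) * t) (W a y - W a x) (Icc a b) t := by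
      simpa using ((hasDerivAt_id t).const_mul (W a y - W a x)).hasDerivWithinAt
    exact ((hY t ht).sub (hX t ht)).sub h1
  have h5 := norm_image_sub_le_of_norm_deriv_le_segment' (C := 2 * G * (b - a)) hd (by
    intro t ht
    have ht' := Ico_subset_Icc_self ht
    have e1 := abs_le.1 (hXb t ht')
    have e2 := abs_le.1 (hYb t ht')
    have : G * (t - a) ≤ G * (b - a) := by
      apply mul_le_mul_of_nonneg_left _ hG0; linarith [ht.2]
    rw [Real.norm_eq_abs, abs_le]
    constructor <;> linarith) b ⟨hab, le_refl _⟩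
  rw [Real.norm_eq_abs, hX0, hY0] at h5
  have := (abs_le.1 h5).2
  nlinarith

open MeasureTheory Filter Set intervalIntegral

structure OHSol (γ a b : ℝ) (U Ux V : ℝ → ℝ → ℝ) : Prop where
  hγ : 0 < γ
  hab : a ≤ b
  cU : Continuous (fun p : ℝ × ℝ => U p.1 p.2)
  cUx : Continuous (fun p : ℝ × ℝ => Ux p.1 p.2)
  cV : Continuous (fun p : ℝ × ℝ => V p.1 p.2)
  dx : ∀ t x, HasDerivAt (U t) (Ux t x) x
  dV : ∀ t x, HasDerivAt (V t) (U t x) x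
  dt : ∀ t ∈ Icc a b, ∀ x,
    HasDerivWithinAt (fun s => U s x) (γ * V t x - U t x * Ux t x) (Icc a b) t
  Vtop : ∀ t, Tendsto (V t) atTop (nhds 0)
  Vbot : ∀ t, Tendsto (V t) atBot (nhds 0)
  intU : ∀ t, Integrable (U t)
  intV : ∀ t, Integrable (fun x => V t x ^ 2)

namespace OHSol

variable {γ a b : ℝ} {U Ux V : ℝ → ℝ → ℝ}

lemma sub (h : OHSol γ a b U Ux V) {a' b' : ℝ} (ha : a ≤ a') (hb : b' ≤ b) (hab' : a' ≤ b') :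
    OHSol γ a' b' U Ux V :=
  { h with
    hab := hab'
    dt := fun t ht x => (h.dt t ⟨ha.trans ht.1, ht.2.trans hb⟩ x).mono (Icc_subset_Icc ha hb) }

lemma oneside (h : OHSol γ a b U Ux V) {S : ℝ} (hS : ∀ t ∈ Icc a b, ∀ x, |V t x| ≤ S)
    {t δ k : ℝ} (hat : a ≤ t) (hδ : 0 < δ) (hδb : t + δ ≤ b) (hk : 0 < k) (x : ℝ) :
    U t x ≤ k / δ + 2 * (γ * S) * δ + (V t (x + k) - V t x) / k ∧
    - U t x ≤ k / δ + 2 * (γ * S) * δ - (V t x - V t (x - k)) / k := by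
  have hγ := h.hγ
  have h1 := h.sub hat hδb (by linarith)
  have key : ∀ y z, y ≤ z → z - y ≤ k → U t y - U t z ≤ k / δ + 2 * (γ * S) * δ := by
    intro y z hyz hzk
    have h2 := oh_noncross (a := t) (b := t + δ) (G := γ * S) h1.hab h1.cU h1.cUx h1.dx h1.dt
      (by
        intro r hr x
        rw [sub_add_cancel, abs_mul, abs_of_pos hγ]
        exact mul_le_mul_of_nonneg_left
          (hS r ⟨hat.trans hr.1, hr.2.trans hδb⟩ x) hγ.le) hyz
    rw [add_sub_cancel_left] at h2
    have h3 : k / δ + 2 * (γ * S) * δ = (k + 2 * (γ * S) * δ ^ 2) / δ := by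
      field_simp
    rw [h3, le_div_iff₀ hδ]
    nlinarith
  constructor
  · obtain ⟨c, hc, hc'⟩ := exists_hasDerivAt_eq_slope (V t) (U t) (show x < x + k by linarith)
      (fun y _ => (h.dV t y).continuousAt.continuousWithinAt) (fun y _ => h.dV t y)
    rw [add_sub_cancel_left] at hc'
    rw [← hc']
    have := key x c hc.1.le (by linarith [hc.2])
    linarith
  · obtain ⟨c, hc, hc'⟩ := exists_hasDerivAt_eq_slope (V t) (U t) (show x - k < x by linarith)
      (fun y _ => (h.dV t y).continuousAt.continuousWithinAt) (fun y _ => h.dV t y)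
    rw [sub_sub_cancel] at hc'
    rw [← hc']
    have := key c x hc.2.le (by linarith [hc.1])
    linarith

lemma bound_init (h : OHSol γ a b U Ux V) {S K : ℝ} (hS : ∀ t ∈ Icc a b, ∀ x, |V t x| ≤ S)
    (hK : ∀ x, |V a x| ≤ K) {k : ℝ} (hk : 0 < k) (hlt : a < b) (x : ℝ) :
    |U a x| ≤ k / (b - a) + 2 * (γ * S) * (b - a) + 2 * K / k := by
  obtain ⟨h1, h2⟩ := h.oneside hS (le_refl a) (sub_pos.2 hlt) (by linarith) hk x
  have e1 : (V a (x + k) - V a x) / k ≤ 2 * K / k := by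
    apply div_le_div_of_nonneg_right _ hk.le
    linarith [(abs_le.1 (hK (x + k))).2, (abs_le.1 (hK x)).1]
  have e2 : - (V a x - V a (x - k)) / k ≤ 2 * K / k := by
    apply div_le_div_of_nonneg_right _ hk.le
    linarith [(abs_le.1 (hK (x - k))).2, (abs_le.1 (hK x)).1]
  rw [neg_div] at e2
  rw [abs_le]
  constructor <;> linarith

lemma bound_evol (h : OHSol γ a b U Ux V) {S M : ℝ} (hS : ∀ t ∈ Icc a b, ∀ x, |V t x| ≤ S)
    (hM : ∀ x, |U a x| ≤ M) {t : ℝ} (ht : t ∈ Icc a b) (x : ℝ) :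
    |U t x| ≤ M + γ * S * (t - a) := by
  have hγ := h.hγ
  have h1 := h.sub (le_refl a) ht.2 ht.1
  obtain ⟨y, hy⟩ := oh_char_back (a := a) (b := t) (G := γ * S) h1.hab h1.cU h1.cUx h1.dx h1.dt
      (by
        intro r hr x
        rw [sub_add_cancel, abs_mul, abs_of_pos hγ]
        exact mul_le_mul_of_nonneg_left
          (hS r ⟨hr.1, hr.2.trans ht.2⟩ x) hγ.le) x
  have := abs_le.1 hy
  have := abs_le.1 (hM y)
  rw [abs_le]
  constructor <;> linarith

lemma decay (h : OHSol γ a b U Ux V) {S : ℝ} (hS : ∀ t ∈ Icc a b, ∀ x, |V t x| ≤ S)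
    {t : ℝ} (ht : t ∈ Ico a b) {l : Filter ℝ} (hl : ∀ k : ℝ, Tendsto (fun x => x + k) l l)
    (hV : Tendsto (V t) l (nhds 0)) : Tendsto (U t) l (nhds 0) := by
  have hS0 : 0 ≤ S := (abs_nonneg _).trans (hS a ⟨le_refl _, h.hab⟩ 0)
  have hγ := h.hγ
  rw [Metric.tendsto_nhds]
  intro ε hε
  set η := ε / 4 with hη
  have hη0 : 0 < η := by positivity
  obtain ⟨δ, hδ, hδb, hδS⟩ : ∃ δ > 0, t + δ ≤ b ∧ 2 * (γ * S) * δ ≤ η := by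
    refine ⟨min (b - t) (η / (2 * (γ * S) + 1)), lt_min (by linarith [ht.2]) (by positivity), ?_, ?_⟩
    · linarith [min_le_left (b - t) (η / (2 * (γ * S) + 1))]
    · have h1 := min_le_right (b - t) (η / (2 * (γ * S) + 1))
      have h2 : 0 ≤ 2 * (γ * S) := by positivity
      calc 2 * (γ * S) * min (b - t) (η / (2 * (γ * S) + 1))
          ≤ 2 * (γ * S) * (η / (2 * (γ * S) + 1)) := mul_le_mul_of_nonneg_left h1 h2
        _ ≤ η := by
          rw [mul_div_assoc', div_le_iff₀ (by positivity)]
          nlinarith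
  set k := η * δ with hk
  have hk0 : 0 < k := by positivity
  have hkδ : k / δ = η := by rw [hk]; field_simp
  have l1 : Tendsto (fun x => (V t (x + k) - V t x) / k) l (nhds 0) := by
    simpa using ((hV.comp (hl k)).sub hV).div_const k
  have l2 : Tendsto (fun x => (V t x - V t (x - k)) / k) l (nhds 0) := by
    simpa [sub_eq_add_neg, Function.comp_def] using ((hV).sub (hV.comp (hl (-k)))).div_const k
  rw [Metric.tendsto_nhds] at l1 l2
  filter_upwards [l1 η hη0, l2 η hη0] with x hx1 hx2
  rw [Real.dist_eq, sub_zero] at *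
  obtain ⟨h1, h2⟩ := h.oneside hS ht.1 hδ hδb hk0 x
  rw [hkδ] at h1 h2
  have := abs_lt.1 hx1
  have := abs_lt.1 hx2
  rw [abs_lt]
  constructor <;> linarith

lemma decay_top (h : OHSol γ a b U Ux V) {S : ℝ} (hS : ∀ t ∈ Icc a b, ∀ x, |V t x| ≤ S)
    {t : ℝ} (ht : t ∈ Ico a b) : Tendsto (U t) atTop (nhds 0) :=
  h.decay hS ht (fun k => tendsto_atTop_add_const_right _ k tendsto_id) (h.Vtop t)

lemma decay_bot (h : OHSol γ a b U Ux V) {S : ℝ} (hS : ∀ t ∈ Icc a b, ∀ x, |V t x| ≤ S)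
    {t : ℝ} (ht : t ∈ Ico a b) : Tendsto (U t) atBot (nhds 0) :=
  h.decay hS ht (fun k => tendsto_atBot_add_const_right _ k tendsto_id) (h.Vbot t)

end OHSol

lemma oh_swap {f : ℝ → ℝ → ℝ} (hf : Continuous (fun p : ℝ × ℝ => f p.1 p.2)) (a b c d : ℝ) :
    ∫ x in a..b, ∫ y in c..d, f x y = ∫ y in c..d, ∫ x in a..b, f x y := by
  apply intervalIntegral_intervalIntegral_swap
  have : IntegrableOn (fun p : ℝ × ℝ => f p.1 p.2) (uIcc a b ×ˢ uIcc c d) :=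
    hf.continuousOn.integrableOn_compact (isCompact_uIcc.prod isCompact_uIcc)
  exact this.mono_set (prod_mono uIoc_subset_uIcc uIoc_subset_uIcc)

lemma oh_glob {s t M M' : ℝ} (hst : s ≤ t) {gs gt : ℝ → ℝ} {f B : ℝ → ℝ → ℝ}
    (igs : Integrable gs) (igt : Integrable gt)
    (cf : Continuous (fun p : ℝ × ℝ => f p.1 p.2))
    (cB : ∀ R, Continuous (fun r => B r R))
    (hloc : ∀ R : ℝ, 0 ≤ R → (∫ x in (-R)..R, gt x) - ∫ x in (-R)..R, gs x =
      ∫ r in s..t, ((∫ x in (-R)..R, f r x) + B r R))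
    (intf : ∀ r ∈ Icc s t, Integrable (f r))
    (hM : ∀ r ∈ Icc s t, ∫ x, |f r x| ≤ M)
    (hB : ∀ r ∈ Icc s t, ∀ R, |B r R| ≤ M')
    (limB : ∀ r ∈ Ico s t, Tendsto (B r) atTop (nhds 0)) :
    (∫ x, gt x) - ∫ x, gs x = ∫ r in s..t, ∫ x, f r x := by
  have l1 : Tendsto (fun R : ℝ => (∫ x in (-R)..R, gt x) - ∫ x in (-R)..R, gs x) atTop
      (nhds ((∫ x, gt x) - ∫ x, gs x)) :=
    (intervalIntegral_tendsto_integral igt tendsto_neg_atTop_atBot tendsto_id).sub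
      (intervalIntegral_tendsto_integral igs tendsto_neg_atTop_atBot tendsto_id)
  have l2 : Tendsto (fun R : ℝ => ∫ r in s..t, ((∫ x in (-R)..R, f r x) + B r R)) atTop
      (nhds (∫ r in s..t, ∫ x, f r x)) := by
    apply intervalIntegral.tendsto_integral_filter_of_dominated_convergence (fun _ => M + M')
    · filter_upwards with R
      have : Continuous (fun r => (∫ x in (-R)..R, f r x) + B r R) :=
        (intervalIntegral.continuous_parametric_intervalIntegral_of_continuous' cf _ _).add (cB R)
      exact this.aestronglyMeasurable
    · filter_upwards [eventually_ge_atTop 0] with R hR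
      filter_upwards with r hr
      rw [uIoc_of_le hst] at hr
      have hr' := Ioc_subset_Icc_self hr
      refine (norm_add_le _ _).trans (add_le_add ?_ (hB r hr' R))
      refine (intervalIntegral.norm_integral_le_integral_norm (by linarith)).trans ?_
      refine le_trans ?_ (hM r hr')
      rw [intervalIntegral.integral_of_le (by linarith)]
      exact setIntegral_le_integral (intf r hr').norm (by filter_upwards with x; positivity)
    · exact intervalIntegrable_const
    · have : ∀ᵐ r : ℝ, r ≠ t := by simp [ae_iff]
      filter_upwards [this] with r hrt hr
      rw [uIoc_of_le hst] at hr
      have hr' := Ioc_subset_Icc_self hr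
      simpa using (intervalIntegral_tendsto_integral (intf r hr') tendsto_neg_atTop_atBot
        tendsto_id).add (limB r ⟨hr'.1, lt_of_le_of_ne hr.2 hrt⟩)
  refine tendsto_nhds_unique l1 (l2.congr' ?_)
  filter_upwards [eventually_ge_atTop 0] with R hR
  exact (hloc R hR).symm

lemma oh_corr {f : ℝ → ℝ} (cf : Continuous f) (hf : Integrable (fun x => f x ^ 2))
    (hbot : Tendsto f atBot (nhds 0)) :
    Tendsto (fun L : ℝ => ∫ x, f x * f (x - L)) atTop (nhds 0) := by
  set N := ∫ x, f x ^ 2 with hN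
  have hN0 : 0 ≤ N := integral_nonneg fun x => by positivity
  have hsh : ∀ L, Integrable (fun x => f (x - L) ^ 2) := fun L => hf.comp_sub_right L
  have hshN : ∀ L, ∫ x, f (x - L) ^ 2 = N := fun L =>
    integral_sub_right_eq_self (fun x => f x ^ 2) L
  have cmul : ∀ L, Continuous (fun x => f x * f (x - L)) := fun L => by fun_prop
  have hmul : ∀ L, Integrable (fun x => f x * f (x - L)) := by
    intro L
    refine (hf.add (hsh L)).mono' (cmul L).aestronglyMeasurable ?_
    filter_upwards with x
    simp only [Pi.add_apply]
    rw [Real.norm_eq_abs, abs_le]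
    constructor <;> nlinarith [sq_nonneg (f x + f (x - L)), sq_nonneg (f x - f (x - L)), sq_nonneg (f x), sq_nonneg (f (x - L))]
  rw [Metric.tendsto_nhds]
  intro ε hε
  set c := 2 * (N + 1) / ε with hc
  have hc0 : 0 < c := by positivity
  have hNc : N / c < ε / 2 := by
    rw [hc, div_div_eq_mul_div, div_lt_iff₀ (by positivity)]
    nlinarith
  have l1 : Tendsto (fun L : ℝ => ∫ x, min (|f x * f (x - L)|) (c * f x ^ 2)) atTop
      (nhds (∫ x : ℝ, (0:ℝ))) := by
    apply MeasureTheory.tendsto_integral_filter_of_dominated_convergence (fun x => c * f x ^ 2)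
    · filter_upwards with L
      have : Continuous fun x => min (|f x * f (x - L)|) (c * f x ^ 2) :=
        ((cmul L).abs).min (by fun_prop)
      exact this.aestronglyMeasurable
    · filter_upwards with L
      filter_upwards with x
      rw [Real.norm_eq_abs, abs_of_nonneg (le_min (abs_nonneg _) (by positivity))]
      exact min_le_right _ _
    · exact hf.const_mul c
    · filter_upwards with x
      have h1 : Tendsto (fun L : ℝ => f (x - L)) atTop (nhds 0) :=
        hbot.comp (tendsto_atBot_add_const_left _ x tendsto_neg_atTop_atBot)
      have h2 := ((h1.const_mul (f x)).abs).min (tendsto_const_nhds (x := c * f x ^ 2))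
      rw [mul_zero, abs_zero, min_eq_left (by positivity)] at h2
      exact h2
  rw [MeasureTheory.integral_zero, Metric.tendsto_nhds] at l1
  filter_upwards [l1 (ε / 2) (by positivity)] with L hL
  rw [Real.dist_eq, sub_zero] at *
  have imin : Integrable (fun x => min (|f x * f (x - L)|) (c * f x ^ 2)) := by
    refine (hf.const_mul c).mono' (((cmul L).abs).min (by fun_prop)).aestronglyMeasurable ?_
    filter_upwards with x
    rw [Real.norm_eq_abs, abs_of_nonneg (le_min (abs_nonneg _) (by positivity))]
    exact min_le_right _ _
  have h3 : |∫ x, f x * f (x - L)| ≤ ∫ x, (min (|f x * f (x - L)|) (c * f x ^ 2) + f (x - L) ^ 2 / c) := by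
    refine abs_integral_le_integral_abs.trans (integral_mono (hmul L).abs (imin.add ((hsh L).div_const c)) ?_)
    intro x
    simp only [Pi.add_apply]
    rcases le_total (|f (x - L)|) (c * |f x|) with h | h
    · rw [min_eq_left]
      · have : 0 ≤ f (x - L) ^ 2 / c := by positivity
        linarith
      · rw [abs_mul, ← sq_abs (f x)]
        nlinarith [abs_nonneg (f x)]
    · have h4 : |f x * f (x - L)| ≤ f (x - L) ^ 2 / c := by
        rw [le_div_iff₀ hc0, abs_mul, ← sq_abs (f (x - L))]
        nlinarith [abs_nonneg (f (x - L))]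
      have : 0 ≤ min (|f x * f (x - L)|) (c * f x ^ 2) := le_min (abs_nonneg _) (by positivity)
      linarith
  rw [MeasureTheory.integral_add imin ((hsh L).div_const c), MeasureTheory.integral_div, hshN] at h3
  have := (abs_lt.1 hL).2
  linarith

open MeasureTheory Filter Set intervalIntegral

namespace OHSol

variable {γ a b : ℝ} {U Ux V : ℝ → ℝ → ℝ}

lemma cU' (h : OHSol γ a b U Ux V) (t : ℝ) : Continuous (U t) :=
  h.cU.comp (by fun_prop : Continuous fun x : ℝ => (t, x))

lemma cV' (h : OHSol γ a b U Ux V) (t : ℝ) : Continuous (V t) :=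
  h.cV.comp (by fun_prop : Continuous fun x : ℝ => (t, x))

lemma cUt (h : OHSol γ a b U Ux V) (x : ℝ) : Continuous (fun t => U t x) :=
  h.cU.comp (by fun_prop : Continuous fun t : ℝ => (t, x))

lemma cVt (h : OHSol γ a b U Ux V) (x : ℝ) : Continuous (fun t => V t x) :=
  h.cV.comp (by fun_prop : Continuous fun t : ℝ => (t, x))

lemma local_law (h : OHSol γ a b U Ux V) (n : ℕ) {s t : ℝ} (hs : a ≤ s) (hst : s ≤ t) (ht : t ≤ b)
    (x1 x2 : ℝ) :
    (∫ x in x1..x2, U t x ^ (n + 1)) - ∫ x in x1..x2, U s x ^ (n + 1) =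
      ∫ r in s..t, ((n + 1 : ℝ) * γ * (∫ x in x1..x2, U r x ^ n * V r x)
        - (n + 1 : ℝ) / (n + 2) * (U r x2 ^ (n + 2) - U r x1 ^ (n + 2))) := by
  have cU := h.cU
  have cV := h.cV
  have cUx := h.cUx
  have e1 : ∀ x, U t x ^ (n + 1) - U s x ^ (n + 1) =
      ∫ r in s..t, ((n + 1 : ℝ) * U r x ^ n * (γ * V r x - U r x * Ux r x)) := by
    intro x
    symm
    apply integral_eq_sub_of_hasDerivAt_of_le (f := fun r => U r x ^ (n+1)) hst
    · exact ((h.cUt x).pow _).continuousOn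
    · intro r hr
      have h1 := (h.dt r ⟨hs.trans hr.1.le, hr.2.le.trans ht⟩ x).hasDerivAt
        (Icc_mem_nhds (by linarith [hr.1]) (by linarith [hr.2]))
      have := h1.fun_pow (n + 1)
      simpa using this
    · apply Continuous.intervalIntegrable
      have c1 := h.cUt x
      have c2 := h.cVt x
      have c3 : Continuous fun r => Ux r x := cUx.comp (by fun_prop : Continuous fun t : ℝ => (t, x))
      fun_prop
  rw [← intervalIntegral.integral_sub (Continuous.intervalIntegrable (by have := h.cU' t; fun_prop) _ _)
    (Continuous.intervalIntegrable (by have := h.cU' s; fun_prop) _ _)]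
  simp_rw [e1]
  rw [oh_swap (f := fun x r => (n + 1 : ℝ) * U r x ^ n * (γ * V r x - U r x * Ux r x))
    (by
      have c1 := cU.comp continuous_swap
      have c2 := cV.comp continuous_swap
      have c3 := cUx.comp continuous_swap
      simp only [Function.comp_def, Prod.fst_swap, Prod.snd_swap] at c1 c2 c3
      fun_prop)]
  congr 1
  ext r
  have c1 := h.cU' r
  have c2 := h.cV' r
  have c3 : Continuous fun x => Ux r x := cUx.comp (by fun_prop : Continuous fun x : ℝ => (r, x))
  have e2 : (n + 1 : ℝ) / (n + 2) * (U r x2 ^ (n + 2) - U r x1 ^ (n + 2)) =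
      ∫ x in x1..x2, (n + 1 : ℝ) * U r x ^ (n + 1) * Ux r x := by
    rw [intervalIntegral.integral_eq_sub_of_hasDerivAt
      (f := fun x => (n + 1 : ℝ) / (n + 2) * U r x ^ (n + 2))]
    · ring
    · intro x _
      have := ((h.dx r x).fun_pow (n + 2)).const_mul ((n + 1 : ℝ) / (n + 2))
      refine this.congr_deriv ?_
      have e3 : n + 2 - 1 = n + 1 := by omega
      rw [e3]
      push_cast
      field_simp
    · apply Continuous.intervalIntegrable
      fun_prop
  rw [e2, ← intervalIntegral.integral_const_mul, ← intervalIntegral.integral_sub]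
  · congr 1; ext x; ring
  · apply Continuous.intervalIntegrable; fun_prop
  · apply Continuous.intervalIntegrable; fun_prop

/-- global boundedness of `U` -/
lemma exists_bound (h : OHSol γ a b U Ux V) {S : ℝ} (hS : ∀ t ∈ Icc a b, ∀ x, |V t x| ≤ S)
    (hlt : a < b) : ∃ M, ∀ t ∈ Icc a b, ∀ x, |U t x| ≤ M := by
  have hS0 : 0 ≤ S := (abs_nonneg _).trans (hS a ⟨le_refl _, h.hab⟩ 0)
  have hγ := h.hγ
  refine ⟨(1 / (b - a) + 2 * (γ * S) * (b - a) + 2 * S / 1) + γ * S * (b - a), fun t ht x => ?_⟩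
  refine (h.bound_evol hS (fun x => h.bound_init hS (hS a ⟨le_refl _, h.hab⟩) one_pos hlt x) ht x).trans ?_
  have : γ * S * (t - a) ≤ γ * S * (b - a) := by
    apply mul_le_mul_of_nonneg_left _ (by positivity); linarith [ht.2]
  linarith

lemma int_mul (h : OHSol γ a b U Ux V) {M t : ℝ} {g : ℝ → ℝ} (cg : Continuous g)
    (hg : ∀ x, |g x| ≤ M) : Integrable (fun x => g x * U t x) :=
  (h.intU t).bdd_mul cg.aestronglyMeasurable (c := M) (by filter_upwards with x; exact hg x)

lemma int_sq (h : OHSol γ a b U Ux V) {M t : ℝ} (hM : ∀ x, |U t x| ≤ M) :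
    Integrable (fun x => U t x ^ 2) := by
  simpa [sq] using h.int_mul (t := t) (h.cU' t) hM

lemma int_cube (h : OHSol γ a b U Ux V) {M t : ℝ} (hM : ∀ x, |U t x| ≤ M) :
    Integrable (fun x => U t x ^ 3) := by
  have := h.int_mul (t := t) (g := fun x => U t x ^ 2) (M := M ^ 2) ((h.cU' t).pow 2) (fun x => by
    rw [abs_pow]; exact pow_le_pow_left₀ (abs_nonneg _) (hM x) 2)
  simpa [pow_succ] using this

lemma int_VU2 (h : OHSol γ a b U Ux V) {M S t : ℝ} (hM : ∀ x, |U t x| ≤ M)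
    (hS : ∀ x, |V t x| ≤ S) : Integrable (fun x => V t x * U t x ^ 2) := 
  (h.int_sq hM).bdd_mul (h.cV' t).aestronglyMeasurable (c := S) (by filter_upwards with x; exact hS x)

lemma abs_VU2 (h : OHSol γ a b U Ux V) {M S t : ℝ} (hM : ∀ x, |U t x| ≤ M)
    (hS : ∀ x, |V t x| ≤ S) : ∫ x, |V t x * U t x ^ 2| ≤ S * ∫ x, U t x ^ 2 := by
  rw [← MeasureTheory.integral_const_mul]
  refine integral_mono (h.int_VU2 hM hS).abs ((h.int_sq hM).const_mul S) fun x => ?_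
  simp only
  rw [abs_mul, abs_of_nonneg (sq_nonneg (U t x))]
  exact mul_le_mul_of_nonneg_right (hS x) (sq_nonneg _)

lemma Q_cons' (h : OHSol γ a b U Ux V) {S : ℝ} (hS : ∀ t ∈ Icc a b, ∀ x, |V t x| ≤ S)
    {s t : ℝ} (hs : a ≤ s) (hst : s < t) (ht : t ≤ b) :
    ∫ x, U t x ^ 2 = ∫ x, U s x ^ 2 := by
  obtain ⟨M, hM⟩ := h.exists_bound hS (by linarith)
  have hm : ∀ r ∈ Icc s t, r ∈ Icc a b := fun r hr => ⟨hs.trans hr.1, hr.2.trans ht⟩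
  have key := oh_glob (s := s) (t := t) (M := 0)
    (M' := 2 * γ * S ^ 2 + 2 * M ^ 3) hst.le (gs := fun x => U s x ^ 2) (gt := fun x => U t x ^ 2)
    (f := fun _ _ => 0)
    (B := fun r R => γ * (V r R ^ 2 - V r (-R) ^ 2) - 2 / 3 * (U r R ^ 3 - U r (-R) ^ 3))
    (h.int_sq (hM s (hm s ⟨le_refl _, hst.le⟩))) (h.int_sq (hM t (hm t ⟨hst.le, le_refl _⟩)))
    (by fun_prop) (fun R => by
      have := h.cUt R
      have := h.cUt (-R)
      have := h.cVt R
      have := h.cVt (-R)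
      fun_prop)
    (by
      intro R hR
      have := h.local_law 1 hs hst.le ht (-R) R
      norm_num at this
      rw [this]
      congr 1
      ext r
      have e : ∫ x in (-R)..R, U r x * V r x = (V r R ^ 2 - V r (-R) ^ 2) / 2 := by
        rw [intervalIntegral.integral_eq_sub_of_hasDerivAt (f := fun x => V r x ^ 2 / 2)]
        · ring
        · intro x _
          refine (((h.dV r x).fun_pow 2).div_const 2).congr_deriv ?_
          norm_num
          ring
        · exact ((h.cU' r).mul (h.cV' r)).intervalIntegrable _ _
      rw [e]; simp; ring)
    (fun r _ => by simp) (fun r _ => by simp)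
    (by
      intro r hr R
      have v1 : ∀ x, V r x ^ 2 ≤ S ^ 2 := fun x => sq_le_sq.2 ((hS r (hm r hr) x).trans (le_abs_self _))
      have u1 : ∀ x, |U r x ^ 3| ≤ M ^ 3 := fun x => by
        rw [abs_pow]; exact pow_le_pow_left₀ (abs_nonneg _) (hM r (hm r hr) x) 3
      have hγ := h.hγ
      have := abs_le.1 (u1 R)
      have := abs_le.1 (u1 (-R))
      have w1 := mul_le_mul_of_nonneg_left (v1 R) hγ.le
      have w2 := mul_le_mul_of_nonneg_left (v1 (-R)) hγ.le
      have w3 := mul_nonneg hγ.le (sq_nonneg (V r R))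
      have w4 := mul_nonneg hγ.le (sq_nonneg (V r (-R)))
      have w5 := mul_nonneg hγ.le (sq_nonneg S)
      rw [abs_le]; constructor <;> linarith)
    (by
      intro r hr
      have hr' : r ∈ Ico a b := ⟨hs.trans hr.1, hr.2.trans_le ht⟩
      have l1 := h.Vtop r
      have l2 := (h.Vbot r).comp tendsto_neg_atTop_atBot
      have l3 := h.decay_top hS hr'
      have l4 := (h.decay_bot hS hr').comp tendsto_neg_atTop_atBot
      simpa using (((l1.pow 2).sub (l2.pow 2)).const_mul γ).sub
        (((l3.pow 3).sub (l4.pow 3)).const_mul (2 / 3)))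
  simp at key
  linarith

lemma Q_cons (h : OHSol γ a b U Ux V) {S : ℝ} (hS : ∀ t ∈ Icc a b, ∀ x, |V t x| ≤ S)
    {s t : ℝ} (hs : s ∈ Icc a b) (ht : t ∈ Icc a b) :
    ∫ x, U t x ^ 2 = ∫ x, U s x ^ 2 := by
  rcases lt_trichotomy s t with h1 | h1 | h1
  · exact h.Q_cons' hS hs.1 h1 ht.2
  · rw [h1]
  · exact (h.Q_cons' hS ht.1 h1 hs.2).symm

lemma cubic (h : OHSol γ a b U Ux V) {S : ℝ} (hS : ∀ t ∈ Icc a b, ∀ x, |V t x| ≤ S)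
    {s t : ℝ} (hs : a ≤ s) (hst : s < t) (ht : t ≤ b) :
    (∫ x, U t x ^ 3) - ∫ x, U s x ^ 3 = 3 * γ * ∫ r in s..t, ∫ x, V r x * U r x ^ 2 := by
  obtain ⟨M, hM⟩ := h.exists_bound hS (by linarith)
  have hγ := h.hγ
  have hm : ∀ r ∈ Icc s t, r ∈ Icc a b := fun r hr => ⟨hs.trans hr.1, hr.2.trans ht⟩
  have key := oh_glob (s := s) (t := t) (M := 3 * γ * (S * ∫ x, U s x ^ 2))
    (M' := 2 * M ^ 4) hst.le (gs := fun x => U s x ^ 3) (gt := fun x => U t x ^ 3)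
    (f := fun r x => 3 * γ * (V r x * U r x ^ 2))
    (B := fun r R => - (3 / 4 * (U r R ^ 4 - U r (-R) ^ 4)))
    (h.int_cube (hM s (hm s ⟨le_refl _, hst.le⟩))) (h.int_cube (hM t (hm t ⟨hst.le, le_refl _⟩)))
    (by have := h.cU; have := h.cV; fun_prop) (fun R => by
      have := h.cUt R
      have := h.cUt (-R)
      fun_prop)
    (by
      intro R hR
      have := h.local_law 2 hs hst.le ht (-R) R
      norm_num at this
      rw [this]
      congr 1
      ext r
      rw [intervalIntegral.integral_const_mul]
      simp_rw [mul_comm (V r _)]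
      ring)
    (fun r hr => (h.int_VU2 (hM r (hm r hr)) (hS r (hm r hr))).const_mul _)
    (fun r hr => by
      simp_rw [abs_mul (3 * γ)]
      rw [MeasureTheory.integral_const_mul, abs_of_pos (by positivity : 0 < 3 * γ)]
      apply mul_le_mul_of_nonneg_left _ (by positivity)
      rw [← h.Q_cons hS (hm s ⟨le_refl _, hst.le⟩) (hm r hr)]
      exact h.abs_VU2 (hM r (hm r hr)) (hS r (hm r hr)))
    (by
      intro r hr R
      have u1 : ∀ x, |U r x ^ 4| ≤ M ^ 4 := fun x => by
        rw [abs_pow]; exact pow_le_pow_left₀ (abs_nonneg _) (hM r (hm r hr) x) 4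
      have := abs_le.1 (u1 R)
      have := abs_le.1 (u1 (-R))
      rw [abs_le]; constructor <;> linarith)
    (by
      intro r hr
      have hr' : r ∈ Ico a b := ⟨hs.trans hr.1, hr.2.trans_le ht⟩
      have l3 := h.decay_top hS hr'
      have l4 := (h.decay_bot hS hr').comp tendsto_neg_atTop_atBot
      simpa using (((l3.pow 4).sub (l4.pow 4)).const_mul (3 / 4)).neg)
  rw [key]
  simp_rw [MeasureTheory.integral_const_mul]
  rw [intervalIntegral.integral_const_mul]

/-- pointwise sup bound -/
lemma V_sq_le (h : OHSol γ a b U Ux V) {M t : ℝ} (hM : ∀ x, |U t x| ≤ M) (x : ℝ) :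
    V t x ^ 2 ≤ ((∫ x, V t x ^ 2) + ∫ x, U t x ^ 2) / 2 := by
  have i1 := h.intV t
  have i2 := h.int_sq hM
  have i3 : Integrable (fun x => 2 * V t x * U t x) := by
    refine (i1.add i2).mono' (((h.cV' t).const_mul 2).mul (h.cU' t)).aestronglyMeasurable ?_
    filter_upwards with x
    simp only [Pi.add_apply]
    rw [Real.norm_eq_abs, abs_le]
    constructor <;> nlinarith [sq_nonneg (V t x + U t x), sq_nonneg (V t x - U t x)]
  have d : ∀ y, HasDerivAt (fun y => V t y ^ 2) (2 * V t y * U t y) y := fun y => by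
    simpa using (h.dV t y).fun_pow 2
  have e1 : ∫ y in Iic x, 2 * V t y * U t y = V t x ^ 2 - 0 :=
    integral_Iic_of_hasDerivAt_of_tendsto' (fun y _ => d y) i3.integrableOn
      (by simpa using (h.Vbot t).pow 2)
  have e2 : ∫ y in Ioi x, 2 * V t y * U t y = 0 - V t x ^ 2 :=
    integral_Ioi_of_hasDerivAt_of_tendsto' (fun y _ => d y) i3.integrableOn
      (by simpa using (h.Vtop t).pow 2)
  have f1 : ∫ y in Iic x, 2 * V t y * U t y ≤ ∫ y in Iic x, (V t y ^ 2 + U t y ^ 2) :=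
    integral_mono i3.integrableOn (i1.add i2).integrableOn fun y => by
      simp only; nlinarith [sq_nonneg (V t y - U t y)]
  have f2 : ∫ y in Ioi x, - (2 * V t y * U t y) ≤ ∫ y in Ioi x, (V t y ^ 2 + U t y ^ 2) :=
    integral_mono i3.neg.integrableOn (i1.add i2).integrableOn fun y => by
      simp only; nlinarith [sq_nonneg (V t y + U t y)]
  rw [MeasureTheory.integral_neg] at f2
  have g := integral_add_compl (measurableSet_Iic (a := x)) (i1.add i2)
  rw [compl_Iic, MeasureTheory.integral_add' i1 i2] at g
  simp only [Pi.add_apply] at g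
  linarith

end OHSol

open MeasureTheory Filter Set intervalIntegral

namespace OHSol

variable {γ a b : ℝ} {U Ux V : ℝ → ℝ → ℝ}

lemma win_step (h : OHSol γ a b U Ux V) {s t : ℝ} (hs : a ≤ s) (hst : s ≤ t) (ht : t ≤ b)
    (L x : ℝ) :
    (V t x - V t (x - L)) - (V s x - V s (x - L)) =
      ∫ r in s..t, (γ * (∫ θ in (0:ℝ)..L, V r (x - θ)) - 1 / 2 * (U r x ^ 2 - U r (x - L) ^ 2)) := by
  have key := h.local_law 0 hs hst ht (x - L) x
  have e : ∀ r, ∫ y in (x - L)..x, U r y = V r x - V r (x - L) := fun r =>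
    intervalIntegral.integral_eq_sub_of_hasDerivAt (fun y _ => h.dV r y)
      ((h.cU' r).intervalIntegrable _ _)
  norm_num at key
  rw [e, e] at key
  rw [key]
  congr 1
  ext r
  rw [intervalIntegral.integral_comp_sub_left (fun y => V r y) x]
  simp

lemma cq (h : OHSol γ a b U Ux V) (L : ℝ) :
    Continuous (fun p : ℝ × ℝ => ∫ θ in (0:ℝ)..L, V p.1 (p.2 - θ)) := by
  apply intervalIntegral.continuous_parametric_intervalIntegral_of_continuous'
  exact h.cV.comp (by fun_prop : Continuous fun q : (ℝ × ℝ) × ℝ => (q.1.1, q.1.2 - q.2))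

lemma dq (h : OHSol γ a b U Ux V) (L r x : ℝ) :
    HasDerivAt (fun x => ∫ θ in (0:ℝ)..L, V r (x - θ)) (V r x - V r (x - L)) x := by
  have e : (fun x => ∫ θ in (0:ℝ)..L, V r (x - θ)) =
      fun x => (∫ y in (0:ℝ)..x, V r y) - ∫ y in (0:ℝ)..(x - L), V r y := by
    ext x
    rw [intervalIntegral.integral_comp_sub_left (fun y => V r y) x, sub_zero,
      intervalIntegral.integral_interval_sub_left] <;>
    exact (h.cV' r).intervalIntegrable _ _
  rw [e]
  have d : ∀ x, HasDerivAt (fun x => ∫ y in (0:ℝ)..x, V r y) (V r x) x := fun x =>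
    (h.cV' r).integral_hasStrictDerivAt 0 x |>.hasDerivAt
  exact (d x).sub ((d (x - L)).comp_sub_const x L)

lemma lim_q (h : OHSol γ a b U Ux V) (L r : ℝ) {S : ℝ} (hS : ∀ x, |V r x| ≤ S) {l l' : Filter ℝ}
    [l.IsCountablyGenerated] {g : ℝ → ℝ}
    (hV : Tendsto (V r) l' (nhds 0)) (hl : ∀ θ, Tendsto (fun x => g x - θ) l l') :
    Tendsto (fun x => ∫ θ in (0:ℝ)..L, V r (g x - θ)) l (nhds 0) := by
  have : Tendsto (fun x => ∫ θ in (0:ℝ)..L, V r (g x - θ)) l (nhds (∫ θ in (0:ℝ)..L, (0:ℝ))) := by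
    apply intervalIntegral.tendsto_integral_filter_of_dominated_convergence (fun _ => S)
    · filter_upwards with x
      exact ((h.cV' r).comp (by fun_prop : Continuous fun θ => g x - θ)).aestronglyMeasurable
    · filter_upwards with x
      filter_upwards with θ _
      exact hS _
    · exact intervalIntegrable_const
    · filter_upwards with θ _
      exact hV.comp (hl θ)
  simpa using this

lemma N_win (h : OHSol γ a b U Ux V) {S : ℝ} (hS : ∀ t ∈ Icc a b, ∀ x, |V t x| ≤ S)
    {s t : ℝ} (hs : a ≤ s) (hst : s < t) (ht : t ≤ b) (L : ℝ) :
    (∫ x, (V t x - V t (x - L)) ^ 2) - ∫ x, (V s x - V s (x - L)) ^ 2 =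
      ∫ r in s..t, ∫ x, - ((V r x - V r (x - L)) * (U r x ^ 2 - U r (x - L) ^ 2)) := by
  obtain ⟨M, hM⟩ := h.exists_bound hS (by linarith)
  have hγ := h.hγ
  have hS0 : 0 ≤ S := (abs_nonneg _).trans (hS a ⟨le_refl _, h.hab⟩ 0)
  have hm : ∀ r ∈ Icc s t, r ∈ Icc a b := fun r hr => ⟨hs.trans hr.1, hr.2.trans ht⟩
  have cq := h.cq L
  have cU := h.cU
  have cV := h.cV
  have cU2 : Continuous fun p : ℝ × ℝ => U p.1 (p.2 - L) :=
    cU.comp (by fun_prop : Continuous fun p : ℝ × ℝ => (p.1, p.2 - L))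
  have cV2 : Continuous fun p : ℝ × ℝ => V p.1 (p.2 - L) :=
    cV.comp (by fun_prop : Continuous fun p : ℝ × ℝ => (p.1, p.2 - L))
  set q : ℝ → ℝ → ℝ := fun r x => ∫ θ in (0:ℝ)..L, V r (x - θ) with hq
  set w : ℝ → ℝ → ℝ := fun r x => V r x - V r (x - L) with hw
  set D : ℝ → ℝ → ℝ := fun r x => U r x ^ 2 - U r (x - L) ^ 2 with hD
  have cw : Continuous fun p : ℝ × ℝ => w p.1 p.2 := cV.sub cV2
  have cD : Continuous fun p : ℝ × ℝ => D p.1 p.2 := (cU.pow 2).sub (cU2.pow 2)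
  have cq : Continuous fun p : ℝ × ℝ => q p.1 p.2 := cq
  have sect : ∀ {f : ℝ → ℝ → ℝ}, Continuous (fun p : ℝ × ℝ => f p.1 p.2) → ∀ r, Continuous (f r) :=
    fun hf r => hf.comp (by fun_prop : Continuous fun x : ℝ => (r, x))
  have sect' : ∀ {f : ℝ → ℝ → ℝ}, Continuous (fun p : ℝ × ℝ => f p.1 p.2) → ∀ x,
      Continuous (fun r => f r x) :=
    fun hf x => hf.comp (by fun_prop : Continuous fun r : ℝ => (r, x))
  have iw : ∀ r, Integrable (fun x => w r x ^ 2) := by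
    intro r
    have i1 := (h.intV r).add ((h.intV r).comp_sub_right L)
    refine (i1.const_mul 2).mono' ((sect cw r).pow 2).aestronglyMeasurable ?_
    filter_upwards with x
    simp only [Pi.add_apply, Real.norm_eq_abs]
    rw [abs_of_nonneg (by positivity)]
    simp only [hw]
    nlinarith [sq_nonneg (V r x + V r (x - L))]
  have hwS : ∀ r ∈ Icc s t, ∀ x, |w r x| ≤ 2 * S := by
    intro r hr x
    have := abs_le.1 (hS r (hm r hr) x)
    have := abs_le.1 (hS r (hm r hr) (x - L))
    simp only [hw]
    rw [abs_le]; constructor <;> linarith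
  have isq : ∀ r ∈ Icc s t, Integrable (fun x => U r x ^ 2 + U r (x - L) ^ 2) := fun r hr =>
    (h.int_sq (hM r (hm r hr))).add ((h.int_sq (hM r (hm r hr))).comp_sub_right L)
  have hfb : ∀ r ∈ Icc s t, ∀ x, |-(w r x * D r x)| ≤ 2 * S * (U r x ^ 2 + U r (x - L) ^ 2) := by
    intro r hr x
    rw [abs_neg, abs_mul]
    apply mul_le_mul (hwS r hr x) _ (abs_nonneg _) (by positivity)
    simp only [hD]
    rw [abs_le]; constructor <;> nlinarith [sq_nonneg (U r x), sq_nonneg (U r (x - L))]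
  have cf : Continuous fun p : ℝ × ℝ => -(w p.1 p.2 * D p.1 p.2) := (cw.mul cD).neg
  have iif : ∀ r ∈ Icc s t, Integrable (fun x => -(w r x * D r x)) := fun r hr =>
    ((isq r hr).const_mul (2 * S)).mono' (sect (f := fun r x => -(w r x * D r x)) cf r).aestronglyMeasurable
      (by filter_upwards with x; exact hfb r hr x)
  have step : ∀ x, w t x ^ 2 - w s x ^ 2 =
      ∫ r in s..t, 2 * w r x * (γ * q r x - 1 / 2 * D r x) := by
    intro x
    set k : ℝ → ℝ := fun r => γ * q r x - 1 / 2 * D r x with hk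
    have ck : Continuous k := ((sect' cq x).const_mul γ).sub ((sect' cD x).const_mul _)
    set F : ℝ → ℝ := fun r => w s x + ∫ ρ in s..r, k ρ with hF
    have dF : ∀ r, HasDerivAt F (k r) r := fun r =>
      ((ck.integral_hasStrictDerivAt s r).hasDerivAt).const_add _
    have hFw : ∀ r ∈ Icc s t, F r = w r x := by
      intro r hr
      have := h.win_step hs hr.1 (hr.2.trans ht) L x
      simp only [hF, hw, hk, hq, hD]
      rw [← this]; ring
    have e : ∫ r in s..t, 2 * F r * k r = F t ^ 2 - F s ^ 2 := by
      apply intervalIntegral.integral_eq_sub_of_hasDerivAt (f := fun r => F r ^ 2)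
      · intro r _
        simpa using (dF r).fun_pow 2
      · apply Continuous.intervalIntegrable
        have : Continuous F := continuous_iff_continuousAt.2 fun r => (dF r).continuousAt
        fun_prop
    rw [← hFw t ⟨hst.le, le_refl _⟩, ← hFw s ⟨le_refl _, hst.le⟩, ← e]
    apply intervalIntegral.integral_congr
    intro r hr
    rw [uIcc_of_le hst.le] at hr
    simp only [hFw r hr, hk]
  have key := oh_glob (s := s) (t := t) (M := 2 * S * (2 * ∫ x, U s x ^ 2))
    (M' := 2 * γ * (S * |L|) ^ 2) hst.le (gs := fun x => w s x ^ 2) (gt := fun x => w t x ^ 2)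
    (f := fun r x => - (w r x * D r x))
    (B := fun r R => γ * (q r R ^ 2 - q r (-R) ^ 2))
    (iw s) (iw t) cf (fun R => by
      have := sect' cq R
      have := sect' cq (-R)
      fun_prop)
    (by
      intro R hR
      rw [← intervalIntegral.integral_sub (Continuous.intervalIntegrable (by have := sect cw t; fun_prop) _ _)
        (Continuous.intervalIntegrable (by have := sect cw s; fun_prop) _ _)]
      simp_rw [step]
      rw [oh_swap (f := fun x r => 2 * w r x * (γ * q r x - 1 / 2 * D r x))
        (by
          have c1 := cw.comp continuous_swap
          have c2 := cq.comp continuous_swap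
          have c3 := cD.comp continuous_swap
          simp only [Function.comp_def, Prod.fst_swap, Prod.snd_swap] at c1 c2 c3
          fun_prop)]
      congr 1
      ext r
      have c1 := sect cw r
      have c2 := sect cq r
      have c3 := sect cD r
      have e2 : γ * (q r R ^ 2 - q r (-R) ^ 2) = ∫ x in (-R)..R, γ * (2 * q r x * w r x) := by
        rw [intervalIntegral.integral_eq_sub_of_hasDerivAt (f := fun x => γ * q r x ^ 2)]
        · ring
        · intro x _
          have := ((h.dq L r x).fun_pow 2).const_mul γ
          refine this.congr_deriv ?_
          simp [hq, hw]
        · apply Continuous.intervalIntegrable; fun_prop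
      rw [e2, ← intervalIntegral.integral_add (Continuous.intervalIntegrable (by fun_prop) _ _)
        (Continuous.intervalIntegrable (by fun_prop) _ _)]
      congr 1
      ext x
      ring)
    iif
    (by
      intro r hr
      have i2 := (h.int_sq (hM r (hm r hr)))
      have : ∫ x, 2 * S * (U r x ^ 2 + U r (x - L) ^ 2) = 2 * S * (2 * ∫ x, U s x ^ 2) := by
        rw [MeasureTheory.integral_const_mul, MeasureTheory.integral_add i2 (i2.comp_sub_right L),
          integral_sub_right_eq_self (fun x => U r x ^ 2) L,
          h.Q_cons hS (hm s ⟨le_refl _, hst.le⟩) (hm r hr)]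
        ring
      rw [← this]
      exact integral_mono (iif r hr).abs ((isq r hr).const_mul (2 * S)) (hfb r hr))
    (by
      intro r hr R
      have q1 : ∀ x, q r x ^ 2 ≤ (S * |L|) ^ 2 := by
        intro x
        apply sq_le_sq.2
        have := intervalIntegral.norm_integral_le_of_norm_le_const (a := 0) (b := L) (C := S)
          (f := fun θ => V r (x - θ)) (fun θ _ => hS r (hm r hr) _)
        rw [sub_zero] at this
        exact this.trans (le_abs_self _)
      have w1 := mul_le_mul_of_nonneg_left (q1 R) hγ.le
      have w2 := mul_le_mul_of_nonneg_left (q1 (-R)) hγ.le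
      have w3 := mul_nonneg hγ.le (sq_nonneg (q r R))
      have w4 := mul_nonneg hγ.le (sq_nonneg (q r (-R)))
      rw [abs_le]; constructor <;> linarith)
    (by
      intro r hr
      have hr' := hm r ⟨hr.1, hr.2.le⟩
      have l1 := h.lim_q L r (hS r hr') (g := fun x => x) (h.Vtop r) (l := atTop)
        (fun θ => tendsto_atTop_add_const_right _ (-θ) tendsto_id)
      have l2 := h.lim_q L r (hS r hr') (g := fun x => -x) (h.Vbot r) (l := atTop)
        (fun θ => tendsto_atBot_add_const_right _ (-θ) tendsto_neg_atTop_atBot)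
      have l3 := ((l1.pow 2).sub (l2.pow 2)).const_mul γ
      have e3 : γ * ((0:ℝ) ^ 2 - 0 ^ 2) = 0 := by ring
      rw [e3] at l3
      exact l3)
  exact key

lemma N_ident (h : OHSol γ a b U Ux V) {S : ℝ} (hS : ∀ t ∈ Icc a b, ∀ x, |V t x| ≤ S)
    {s t : ℝ} (hs : a ≤ s) (hst : s < t) (ht : t ≤ b) :
    (∫ x, V t x ^ 2) - ∫ x, V s x ^ 2 = - ∫ r in s..t, ∫ x, V r x * U r x ^ 2 := by
  obtain ⟨M, hM⟩ := h.exists_bound hS (by linarith)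
  have hS0 : 0 ≤ S := (abs_nonneg _).trans (hS a ⟨le_refl _, h.hab⟩ 0)
  have hm : ∀ r ∈ Icc s t, r ∈ Icc a b := fun r hr => ⟨hs.trans hr.1, hr.2.trans ht⟩
  have L1 : ∀ r, Tendsto (fun L : ℝ => ∫ x, (V r x - V r (x - L)) ^ 2) atTop
      (nhds (2 * ∫ x, V r x ^ 2)) := by
    intro r
    have c := oh_corr (h.cV' r) (h.intV r) (h.Vbot r)
    have e : ∀ L, ∫ x, (V r x - V r (x - L)) ^ 2 =
        2 * (∫ x, V r x ^ 2) - 2 * ∫ x, V r x * V r (x - L) := by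
      intro L
      have i1 := h.intV r
      have i2 : Integrable (fun x => V r (x - L) ^ 2) := i1.comp_sub_right L
      have i3 : Integrable (fun x => V r x * V r (x - L)) := by
        refine (i1.add i2).mono' ((h.cV' r).mul ((h.cV' r).comp (by fun_prop))).aestronglyMeasurable ?_
        filter_upwards with x
        simp only [Pi.add_apply]
        rw [Real.norm_eq_abs, abs_le]
        constructor <;> nlinarith [sq_nonneg (V r x + V r (x - L)), sq_nonneg (V r x - V r (x - L)), sq_nonneg (V r x), sq_nonneg (V r (x - L))]
      have e1 : ∫ x, V r (x - L) ^ 2 = ∫ x, V r x ^ 2 :=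
        integral_sub_right_eq_self (fun x => V r x ^ 2) L
      calc ∫ x, (V r x - V r (x - L)) ^ 2
          = ∫ x, ((V r x ^ 2 + V r (x - L) ^ 2) - 2 * (V r x * V r (x - L))) := by
            congr 1; ext x; ring
        _ = _ := by
            rw [MeasureTheory.integral_sub (f := fun x => V r x ^ 2 + V r (x - L) ^ 2) (i1.add i2) (i3.const_mul 2),
              MeasureTheory.integral_add i1 i2, MeasureTheory.integral_const_mul, e1]
            ring
    simp_rw [e]
    simpa using (tendsto_const_nhds (x := 2 * ∫ x, V r x ^ 2)).sub (c.const_mul 2)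
  have L2 : Tendsto (fun L : ℝ => ∫ r in s..t, ∫ x,
      - ((V r x - V r (x - L)) * (U r x ^ 2 - U r (x - L) ^ 2))) atTop
      (nhds (∫ r in s..t, -(2 * ∫ x, V r x * U r x ^ 2))) := by
    have eq1 : ∀ r ∈ Icc s t, ∀ L, ∫ x, - ((V r x - V r (x - L)) * (U r x ^ 2 - U r (x - L) ^ 2)) =
        -(2 * ∫ x, V r x * U r x ^ 2) + ((∫ x, V r (x - L) * U r x ^ 2) + ∫ x, V r (x + L) * U r x ^ 2) := by
      intro r hr L
      have i2 := h.int_sq (hM r (hm r hr))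
      have bd : ∀ c, Integrable (fun x => V r (x + c) * U r x ^ 2) := fun c =>
        i2.bdd_mul ((h.cV' r).comp (by fun_prop : Continuous fun x => x + c)).aestronglyMeasurable
          (c := S) (by filter_upwards with x; exact hS r (hm r hr) _)
      have i3 := h.int_VU2 (hM r (hm r hr)) (hS r (hm r hr))
      have i4 : Integrable (fun x => V r (x - L) * U r (x - L) ^ 2) := i3.comp_sub_right L
      have i5 : Integrable (fun x => V r x * U r (x - L) ^ 2) := by
        simpa using (bd L).comp_sub_right L
      have i6 : Integrable (fun x => V r (x - L) * U r x ^ 2) := bd (-L)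
      have e4 : ∫ x, V r (x - L) * U r (x - L) ^ 2 = ∫ x, V r x * U r x ^ 2 :=
        integral_sub_right_eq_self (fun x => V r x * U r x ^ 2) L
      have e5 : ∫ x, V r x * U r (x - L) ^ 2 = ∫ x, V r (x + L) * U r x ^ 2 := by
        have := integral_sub_right_eq_self (μ := volume) (fun x => V r (x + L) * U r x ^ 2) L
        simpa using this
      calc _ = ∫ x, ((V r (x - L) * U r x ^ 2 + V r x * U r (x - L) ^ 2) - (V r x * U r x ^ 2
              + V r (x - L) * U r (x - L) ^ 2)) := by
            congr 1; ext x; ring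
        _ = _ := by
            rw [MeasureTheory.integral_sub (f := fun x => V r (x - L) * U r x ^ 2 + V r x * U r (x - L) ^ 2)
              (g := fun x => V r x * U r x ^ 2 + V r (x - L) * U r (x - L) ^ 2) (i6.add i5) (i3.add i4),
              MeasureTheory.integral_add i6 i5, MeasureTheory.integral_add i3 i4, e4, e5]
            ring
    have lim0 : ∀ r ∈ Icc s t, ∀ (g : ℝ → ℝ → ℝ) (l : Filter ℝ), (∀ L, Continuous (g L)) →
        (∀ x, Tendsto (fun L => g L x) atTop l) → Tendsto (V r) l (nhds 0) →
        Tendsto (fun L : ℝ => ∫ x, V r (g L x) * U r x ^ 2) atTop (nhds 0) := by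
      intro r hr g l cg hg hV
      have : Tendsto (fun L : ℝ => ∫ x, V r (g L x) * U r x ^ 2) atTop (nhds (∫ x : ℝ, (0:ℝ))) := by
        apply MeasureTheory.tendsto_integral_filter_of_dominated_convergence (fun x => S * U r x ^ 2)
        · filter_upwards with L
          exact (((h.cV' r).comp (cg L)).mul ((h.cU' r).pow 2)).aestronglyMeasurable
        · filter_upwards with L
          filter_upwards with x
          rw [Real.norm_eq_abs, abs_mul, abs_of_nonneg (sq_nonneg (U r x))]
          exact mul_le_mul_of_nonneg_right (hS r (hm r hr) _) (sq_nonneg _)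
        · exact (h.int_sq (hM r (hm r hr))).const_mul S
        · filter_upwards with x
          simpa using (hV.comp (hg x)).mul_const (U r x ^ 2)
      simpa using this
    apply intervalIntegral.tendsto_integral_filter_of_dominated_convergence
      (fun _ => 4 * (S * ∫ x, U s x ^ 2))
    · filter_upwards with L
      have c : Continuous fun p : ℝ × ℝ =>
          - ((V p.1 p.2 - V p.1 (p.2 - L)) * (U p.1 p.2 ^ 2 - U p.1 (p.2 - L) ^ 2)) := by
        have cU := h.cU
        have cV := h.cV
        have cU2 : Continuous fun p : ℝ × ℝ => U p.1 (p.2 - L) :=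
          cU.comp (by fun_prop : Continuous fun p : ℝ × ℝ => (p.1, p.2 - L))
        have cV2 : Continuous fun p : ℝ × ℝ => V p.1 (p.2 - L) :=
          cV.comp (by fun_prop : Continuous fun p : ℝ × ℝ => (p.1, p.2 - L))
        fun_prop
      exact (c.stronglyMeasurable.integral_prod_right (ν := volume)).aestronglyMeasurable
    · filter_upwards with L
      filter_upwards with r hr
      rw [uIoc_of_le hst.le] at hr
      have hr' := Ioc_subset_Icc_self hr
      rw [eq1 r hr']
      have i2 := h.int_sq (hM r (hm r hr'))
      have hb : ∀ g : ℝ → ℝ, Continuous g → |∫ x, V r (g x) * U r x ^ 2| ≤ S * ∫ x, U s x ^ 2 := by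
        intro g cg
        rw [← h.Q_cons hS (hm s ⟨le_refl _, hst.le⟩) (hm r hr'), ← MeasureTheory.integral_const_mul]
        rw [← Real.norm_eq_abs]
        refine MeasureTheory.norm_integral_le_of_norm_le (i2.const_mul S) ?_
        filter_upwards with x
        rw [Real.norm_eq_abs, abs_mul, abs_of_nonneg (sq_nonneg (U r x))]
        exact mul_le_mul_of_nonneg_right (hS r (hm r hr') _) (sq_nonneg _)
      have := abs_le.1 (hb (fun x => x) (by fun_prop))
      have := abs_le.1 (hb (fun x => x - L) (by fun_prop))
      have := abs_le.1 (hb (fun x => x + L) (by fun_prop))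
      rw [Real.norm_eq_abs, abs_le]
      constructor <;> linarith
    · exact intervalIntegrable_const
    · filter_upwards with r hr
      rw [uIoc_of_le hst.le] at hr
      have hr' := Ioc_subset_Icc_self hr
      simp_rw [eq1 r hr']
      have l1 := lim0 r hr' (fun L x => x - L) atBot (fun L => by fun_prop)
        (fun x => tendsto_atBot_add_const_left _ x tendsto_neg_atTop_atBot) (h.Vbot r)
      have l2 := lim0 r hr' (fun L x => x + L) atTop (fun L => by fun_prop)
        (fun x => tendsto_atTop_add_const_left _ x tendsto_id) (h.Vtop r)
      simpa using (l1.add l2).const_add (-(2 * ∫ x, V r x * U r x ^ 2))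
  have L3 := (L1 t).sub (L1 s)
  simp_rw [h.N_win hS hs hst ht] at L3
  have := tendsto_nhds_unique L3 L2
  rw [intervalIntegral.integral_neg, intervalIntegral.integral_const_mul] at this
  linarith

lemma N_diff (h : OHSol γ a b U Ux V) {S : ℝ} (hS : ∀ t ∈ Icc a b, ∀ x, |V t x| ≤ S)
    {s t : ℝ} (hs : s ∈ Icc a b) (ht : t ∈ Icc a b) :
    |(∫ x, V t x ^ 2) - ∫ x, V s x ^ 2| ≤ S * (∫ x, U a x ^ 2) * |t - s| := by
  have main : ∀ s t, a ≤ s → s < t → t ≤ b →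
      |(∫ x, V t x ^ 2) - ∫ x, V s x ^ 2| ≤ S * (∫ x, U a x ^ 2) * |t - s| := by
    intro s t hs hst ht
    obtain ⟨M, hM⟩ := h.exists_bound hS (by linarith)
    rw [h.N_ident hS hs hst ht, abs_neg]
    rw [← Real.norm_eq_abs]
    refine intervalIntegral.norm_integral_le_of_norm_le_const fun r hr => ?_
    rw [uIoc_of_le hst.le] at hr
    have hr' : r ∈ Icc a b := ⟨hs.trans hr.1.le, hr.2.trans ht⟩
    refine (MeasureTheory.abs_integral_le_integral_abs).trans ?_
    rw [← h.Q_cons hS ⟨le_refl _, h.hab⟩ hr']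
    exact h.abs_VU2 (hM r hr') (hS r hr')
  rcases lt_trichotomy s t with h1 | h1 | h1
  · exact main s t hs.1 h1 ht.2
  · simp [h1]
  · rw [abs_sub_comm, abs_sub_comm t]; exact main t s ht.1 h1 hs.2

end OHSol

open MeasureTheory Filter Set intervalIntegral

namespace OHSol

variable {γ a b : ℝ} {U Ux V : ℝ → ℝ → ℝ}

lemma exists_sup (h : OHSol γ a b U Ux V) {S : ℝ} (hS : ∀ t ∈ Icc a b, ∀ x, |V t x| ≤ S) :
    ∃ S0, 0 ≤ S0 ∧ (∀ t ∈ Icc a b, ∀ x, |V t x| ≤ S0) ∧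
      ∀ S', (∀ t ∈ Icc a b, ∀ x, |V t x| ≤ S') → S0 ≤ S' := by
  have ha : a ∈ Icc a b := ⟨le_refl _, h.hab⟩
  set A : Set ℝ := {r | ∃ t ∈ Icc a b, ∃ x, r = |V t x|} with hA
  have ne : A.Nonempty := ⟨_, a, ha, 0, rfl⟩
  have bd : BddAbove A := ⟨S, by rintro r ⟨t, ht, x, rfl⟩; exact hS t ht x⟩
  have ub : ∀ t ∈ Icc a b, ∀ x, |V t x| ≤ sSup A := fun t ht x => le_csSup bd ⟨t, ht, x, rfl⟩
  refine ⟨sSup A, (abs_nonneg _).trans (ub a ha 0), ub, fun S' h' => csSup_le ne ?_⟩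
  rintro r ⟨t, ht, x, rfl⟩
  exact h' t ht x

/-- the self-consistent estimate for the supremum -/
lemma sup_sq (h : OHSol γ a b U Ux V) {S : ℝ} (hS0 : 0 ≤ S) (hS : ∀ t ∈ Icc a b, ∀ x, |V t x| ≤ S)
    (hmin : ∀ S', (∀ t ∈ Icc a b, ∀ x, |V t x| ≤ S') → S ≤ S') (hlt : a < b) {t0 : ℝ}
    (ht0 : t0 ∈ Icc a b) :
    S ^ 2 ≤ ((∫ x, V t0 x ^ 2) + S * (∫ x, U a x ^ 2) * (b - a) + ∫ x, U a x ^ 2) / 2 := by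
  obtain ⟨M, hM⟩ := h.exists_bound hS hlt
  have hQ0 : 0 ≤ ∫ x, U a x ^ 2 := integral_nonneg fun x => by positivity
  have ha : a ∈ Icc a b := ⟨le_refl _, h.hab⟩
  set Z := ((∫ x, V t0 x ^ 2) + S * (∫ x, U a x ^ 2) * (b - a) + ∫ x, U a x ^ 2) / 2 with hZ
  have key : ∀ t ∈ Icc a b, ∀ x, V t x ^ 2 ≤ Z := by
    intro t ht x
    have h1 := h.V_sq_le (hM t ht) x
    rw [h.Q_cons hS ha ht] at h1
    have h2 := (abs_le.1 (h.N_diff hS ht0 ht)).2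
    have h3 : |t - t0| ≤ b - a := by
      rw [abs_le]; constructor <;> linarith [ht.1, ht.2, ht0.1, ht0.2]
    have h4 : S * (∫ x, U a x ^ 2) * |t - t0| ≤ S * (∫ x, U a x ^ 2) * (b - a) :=
      mul_le_mul_of_nonneg_left h3 (mul_nonneg hS0 hQ0)
    rw [hZ]
    linarith
  have hZ0 : 0 ≤ Z := (sq_nonneg _).trans (key a ha 0)
  have h5 := hmin (Real.sqrt Z) (fun t ht x => Real.abs_le_sqrt (key t ht x))
  calc S ^ 2 ≤ (Real.sqrt Z) ^ 2 := pow_le_pow_left₀ hS0 h5 2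
    _ = Z := Real.sq_sqrt hZ0

lemma ext_bound (h : OHSol γ a b U Ux V) {S : ℝ} (hS : ∀ t ∈ Icc a b, ∀ x, |V t x| ≤ S)
    (hlt : a < b) {t0 : ℝ} (ht0 : t0 ∈ Icc a b) {t : ℝ} (ht : t ∈ Icc a b) (x : ℝ) :
    |V t x| ≤ 1 + ((∫ x, V t0 x ^ 2) + ∫ x, U t0 x ^ 2) / 2 + (∫ x, U t0 x ^ 2) * (b - a) / 2 := by
  obtain ⟨S0, h0, hS0, hmin⟩ := h.exists_sup hS
  refine (hS0 t ht x).trans ?_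
  have k := h.sup_sq h0 hS0 hmin hlt ht0
  rw [h.Q_cons hS ht0 ⟨le_refl _, h.hab⟩] at k
  have hQ0 : 0 ≤ ∫ x, U t0 x ^ 2 := integral_nonneg fun x => by positivity
  have hN0 : 0 ≤ ∫ x, V t0 x ^ 2 := integral_nonneg fun x => by positivity
  have hQl : 0 ≤ (∫ x, U t0 x ^ 2) * (b - a) := mul_nonneg hQ0 (by linarith)
  by_contra hcon
  push Not at hcon
  have h1 : 1 ≤ S0 := by linarith
  nlinarith

lemma exists_small (h : OHSol γ a b U Ux V) (t x : ℝ) :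
    ∃ y ∈ Icc x (x + 1), V t y ^ 2 ≤ ∫ x, V t x ^ 2 := by
  have cV := h.cV' t
  obtain ⟨c, hc, hmin⟩ := isCompact_Icc.exists_isMinOn (s := Icc x (x + 1)) ⟨x, le_refl _, by linarith⟩
    (f := fun y => V t y ^ 2) (by fun_prop)
  refine ⟨c, hc, ?_⟩
  have e1 : ∫ y in x..(x + 1), V t c ^ 2 ≤ ∫ y in x..(x + 1), V t y ^ 2 := by
    apply intervalIntegral.integral_mono_on (by linarith) intervalIntegrable_const
      (Continuous.intervalIntegrable (by fun_prop) _ _)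
    intro y hy
    exact hmin hy
  have e2 : ∫ y in x..(x + 1), V t y ^ 2 ≤ ∫ y, V t y ^ 2 := by
    rw [intervalIntegral.integral_of_le (by linarith)]
    exact setIntegral_le_integral (h.intV t) (by filter_upwards with y; positivity)
  simp at e1
  linarith

lemma oh_alg {K A γ l σ y : ℝ} (hK : 1 ≤ K) (hA0 : 0 < A) (hγ : 0 < γ) (hl0 : 0 < l) (hl1 : l ≤ 1)
    (hσ0 : 0 < σ) (hσ1 : σ ≤ 1) (hsm : 2 * γ * K * l ≤ 1) (hy0 : 0 ≤ y)
    (h1 : y ^ 2 ≤ (K * l + y * K * (A + 2 * γ * l * y) * l + K * (A + 2 * γ * l * y) * σ) / 2) :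
    y ≤ 1 + (K + K * A + (K * A + 1)) := by
  have hK0 : 0 < K := by linarith
  have hKA : 0 < K * A := by positivity
  have b1 : K * l ≤ K := mul_le_of_le_one_right hK0.le hl1
  have b2 : y * K * (A + 2 * γ * l * y) * l ≤ K * A * y + y ^ 2 := by
    have c1 : y * K * A * l ≤ y * K * A * 1 := mul_le_mul_of_nonneg_left hl1 (by positivity)
    have c2 : (2 * γ * K * l) * l ≤ 1 * 1 := mul_le_mul hsm hl1 hl0.le (by norm_num)
    have c3 : y ^ 2 * ((2 * γ * K * l) * l) ≤ y ^ 2 * (1 * 1) := mul_le_mul_of_nonneg_left c2 (by positivity)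
    linarith
  have b3 : K * (A + 2 * γ * l * y) * σ ≤ K * A + y := by
    have c1 : K * A * σ ≤ K * A * 1 := mul_le_mul_of_nonneg_left hσ1 (by positivity)
    have c2 : (2 * γ * K * l) * σ ≤ 1 * 1 := mul_le_mul hsm hσ1 hσ0.le (by norm_num)
    have c3 : y * ((2 * γ * K * l) * σ) ≤ y * (1 * 1) := mul_le_mul_of_nonneg_left c2 (by positivity)
    linarith
  have hys : y ^ 2 ≤ K + K * A + (K * A + 1) * y := by
    have : 0 ≤ K * A * y := by positivity
    linarith
  by_contra hcon
  push Not at hcon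
  have h1 : 1 ≤ y := by linarith
  have h2 : (K + K * A) * 1 ≤ (K + K * A) * y := mul_le_mul_of_nonneg_left h1 (by linarith)
  have h3 : y * (1 + (K + K * A + (K * A + 1))) < y * y := mul_lt_mul_of_pos_left hcon (by linarith)
  linarith

lemma gap (γ K : ℝ) (hK : 1 ≤ K) : ∃ C : ℝ, ∀ (a b : ℝ) (U Ux V : ℝ → ℝ → ℝ) (S : ℝ),
    OHSol γ a b U Ux V → (∀ t ∈ Icc a b, ∀ x, |V t x| ≤ S) → a < b → b - a ≤ 1 →
    2 * γ * K * (b - a) ≤ 1 → ∫ x, |U a x| ≤ K → ∫ x, V a x ^ 2 ≤ K → (∀ x, |V a x| ≤ K) →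
    ∀ t ∈ Icc a b, ∀ x, |V t x| ≤ C := by
  set A := 1 + 2 * K with hA
  set Y := 1 + (K + K * A + (K * A + 1)) with hY
  set P := A + Y with hP
  set N1 := K + K * Y * P with hN1
  refine ⟨1 + N1 + (K + (γ * Y + (P + Y) ^ 2)), ?_⟩
  intro a b U Ux V S h hS' hlt hl1 hsm hU hV hVK t ht x
  have hγ := h.hγ
  obtain ⟨S, hS0, hS, hmin⟩ := h.exists_sup hS'
  have ha : a ∈ Icc a b := ⟨le_refl _, h.hab⟩
  set l := b - a with hl
  have hl0 : 0 < l := by rw [hl]; linarith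
  set σ := Real.sqrt l with hσ
  have hσ0 : 0 < σ := Real.sqrt_pos.2 hl0
  have hσl : σ ^ 2 = l := Real.sq_sqrt hl0.le
  have hσ1 : σ ≤ 1 := by nlinarith
  have hgl : γ * l ≤ 1 := by
    have : γ * l * 1 ≤ γ * l * K := mul_le_mul_of_nonneg_left hK (by positivity)
    nlinarith [mul_pos hγ hl0]
  have hgl2 : 2 * γ * l ≤ 1 := by
    have : γ * l * 1 ≤ γ * l * K := mul_le_mul_of_nonneg_left hK (by positivity)
    nlinarith [mul_pos hγ hl0]
  set m := A / σ + 2 * γ * S * l with hm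
  have hA0 : 0 < A := by rw [hA]; linarith
  have hm0 : 0 ≤ m := by positivity
  have hUm : ∀ x, |U a x| ≤ m := by
    intro x
    have := h.bound_init hS hVK hσ0 hlt x
    rw [← hl] at this
    have e : σ / l = 1 / σ := by rw [← hσl]; field_simp
    rw [e] at this
    have e2 : m = 1 / σ + 2 * (γ * S) * l + 2 * K / σ := by rw [hm, hA]; field_simp; ring
    rw [e2]; exact this
  have iUa := (h.intU a).abs
  have hQ : ∫ x, U a x ^ 2 ≤ K * m := by
    calc ∫ x, U a x ^ 2 ≤ ∫ x, m * |U a x| := by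
          refine integral_mono (h.int_sq hUm) (iUa.const_mul m) fun x => ?_
          simp only
          rw [← sq_abs, sq]
          exact mul_le_mul_of_nonneg_right (hUm x) (abs_nonneg _)
      _ = m * ∫ x, |U a x| := MeasureTheory.integral_const_mul _ _
      _ ≤ K * m := by rw [mul_comm K]; exact mul_le_mul_of_nonneg_left hU hm0
  have hQ0 : 0 ≤ ∫ x, U a x ^ 2 := integral_nonneg fun x => by positivity
  have hsup := h.sup_sq hS0 hS hmin hlt ha
  rw [← hl] at hsup
  have hSQl : S * (∫ x, U a x ^ 2) * l ≤ S * (K * m) * l := by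
    apply mul_le_mul_of_nonneg_right _ hl0.le
    exact mul_le_mul_of_nonneg_left hQ hS0
  set y := S * σ with hy
  have hy0 : 0 ≤ y := by positivity
  have hmσ : m * σ = A + 2 * γ * l * y := by rw [hm, hy]; field_simp
  have hmσ2 : m * σ ≤ A + y := by
    rw [hmσ]; linarith [mul_le_of_le_one_left hy0 hgl2]
  have hyY : y ≤ Y := by
    have h1 : S ^ 2 * l ≤ (K + S * (K * m) * l + K * m) / 2 * l := by
      apply mul_le_mul_of_nonneg_right _ hl0.le
      linarith
    have h2 : S ^ 2 * l = y ^ 2 := by rw [hy, ← hσl]; ring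
    have h3 : (K + S * (K * m) * l + K * m) / 2 * l =
        (K * l + y * K * (m * σ) * l + K * (m * σ) * σ) / 2 := by
      rw [hy, ← hσl]; ring
    rw [h2, h3, hmσ] at h1
    exact oh_alg hK hA0 hγ hl0 hl1 hσ0 hσ1 hsm hy0 h1
  have hmP : m * σ ≤ P := by rw [hP]; linarith
  have hY0 : 0 ≤ Y := hy0.trans hyY
  have hP0 : 0 ≤ P := by rw [hP]; linarith
  have hNt : ∫ x, V t x ^ 2 ≤ N1 := by
    have h1 := (abs_le.1 (h.N_diff hS ha ht)).2
    have h2 : |t - a| ≤ l := by rw [abs_of_nonneg (by linarith [ht.1])]; linarith [ht.2]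
    have h3 : S * (∫ x, U a x ^ 2) * |t - a| ≤ S * (∫ x, U a x ^ 2) * l :=
      mul_le_mul_of_nonneg_left h2 (mul_nonneg hS0 hQ0)
    have h4 : S * (K * m) * l = K * (y * (m * σ)) := by rw [hy, ← hσl]; ring
    have h5 : y * (m * σ) ≤ Y * P := mul_le_mul hyY hmP (by positivity) hY0
    have h6 : K * (y * (m * σ)) ≤ K * (Y * P) := mul_le_mul_of_nonneg_left h5 (by linarith)
    rw [hN1]
    linarith
  have hN10 : 0 ≤ N1 := (integral_nonneg fun x => by positivity).trans hNt
  obtain ⟨z, hz, hVz⟩ := h.exists_small t x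
  have hVz' : |V t z| ≤ 1 + N1 := by
    apply abs_le_of_sq_le_sq _ (by linarith)
    nlinarith
  -- local law with n = 0
  have key := h.local_law 0 (le_refl a) ht.1 ht.2 x z
  have e : ∀ r, ∫ y in x..z, U r y = V r z - V r x := fun r =>
    intervalIntegral.integral_eq_sub_of_hasDerivAt (fun y _ => h.dV r y)
      ((h.cU' r).intervalIntegrable _ _)
  norm_num at key
  rw [e t] at key
  have hI : |∫ y in x..z, U a y| ≤ K := by
    refine le_trans ?_ hU
    refine (intervalIntegral.abs_integral_le_integral_abs hz.1).trans ?_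
    rw [intervalIntegral.integral_of_le hz.1]
    exact setIntegral_le_integral iUa (by filter_upwards with y; positivity)
  have hUt : ∀ r ∈ Icc a b, ∀ x, |U r x| ≤ m + γ * S * l := by
    intro r hr x
    refine (h.bound_evol hS hUm hr x).trans ?_
    have : γ * S * (r - a) ≤ γ * S * l := by
      apply mul_le_mul_of_nonneg_left _ (by positivity)
      rw [hl]; linarith [hr.2]
    linarith
  have hR : |∫ r in a..t, ((γ * ∫ x in x..z, V r x) - 1 / 2 * (U r z ^ 2 - U r x ^ 2))| ≤
      (γ * S + (m + γ * S * l) ^ 2) * l := by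
    have h1 : ‖∫ r in a..t, ((γ * ∫ x in x..z, V r x) - 1 / 2 * (U r z ^ 2 - U r x ^ 2))‖ ≤
      (γ * S + (m + γ * S * l) ^ 2) * |t - a| := by
      refine intervalIntegral.norm_integral_le_of_norm_le_const fun r hr => ?_
      rw [uIoc_of_le ht.1] at hr
      have hr' : r ∈ Icc a b := ⟨hr.1.le, hr.2.trans ht.2⟩
      have q1 : |∫ x in x..z, V r x| ≤ S * |z - x| := by
        rw [← Real.norm_eq_abs]
        exact intervalIntegral.norm_integral_le_of_norm_le_const fun θ _ => hS r hr' _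
      have q2 : |z - x| ≤ 1 := by
        rw [abs_le]; constructor <;> linarith [hz.1, hz.2]
      have q3 : |∫ x in x..z, V r x| ≤ S := q1.trans (mul_le_of_le_one_right hS0 q2)
      have q4 : |γ * ∫ x in x..z, V r x| ≤ γ * S := by
        rw [abs_mul, abs_of_pos hγ]
        exact mul_le_mul_of_nonneg_left q3 hγ.le
      have q5 : ∀ x, U r x ^ 2 ≤ (m + γ * S * l) ^ 2 := fun x =>
        sq_le_sq.2 ((hUt r hr' x).trans (le_abs_self _))
      have q6 := abs_le.1 q4
      have q7 := q5 x
      have q8 := q5 z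
      rw [Real.norm_eq_abs, abs_le]
      have q9 := sq_nonneg (U r x)
      have q10 := sq_nonneg (U r z)
      constructor <;> linarith
    refine h1.trans (mul_le_mul_of_nonneg_left ?_ (by positivity))
    rw [abs_of_nonneg (by linarith [ht.1])]; linarith [ht.2]
  have hR2 : (γ * S + (m + γ * S * l) ^ 2) * l ≤ γ * Y + (P + Y) ^ 2 := by
    have r1 : (γ * S + (m + γ * S * l) ^ 2) * l = γ * (σ * y) + (m * σ + γ * l * y) ^ 2 := by
      rw [hy, ← hσl]; ring
    rw [r1]
    have r2 : σ * y ≤ Y := (mul_le_of_le_one_left hy0 hσ1).trans hyY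
    have r3 : m * σ + γ * l * y ≤ P + Y := add_le_add hmP ((mul_le_of_le_one_left hy0 hgl).trans hyY)
    have r4 := pow_le_pow_left₀ (by positivity : 0 ≤ m * σ + γ * l * y) r3 2
    have r5 := mul_le_mul_of_nonneg_left r2 hγ.le
    linarith
  rw [← key] at hR
  have k1 := abs_le.1 hR
  have k2 := abs_le.1 hI
  have k3 := abs_le.1 hVz'
  rw [abs_le]
  constructor <;> linarith

end OHSol

open MeasureTheory Filter Set intervalIntegral

noncomputable def ohv (u : ℝ → ℝ → ℝ) (t x : ℝ) : ℝ := ∫ y in Set.Iic x, u t y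

noncomputable def ohcl (a b t : ℝ) : ℝ := max a (min t b)

lemma ohcl_mem {a b : ℝ} (hab : a ≤ b) (t : ℝ) : ohcl a b t ∈ Icc a b :=
  ⟨le_max_left _ _, max_le hab (min_le_right _ _)⟩

lemma ohcl_eq {a b t : ℝ} (ht : t ∈ Icc a b) : ohcl a b t = t := by
  unfold ohcl
  rw [min_eq_left ht.2, max_eq_right ht.1]

lemma ohcl_cont (a b : ℝ) : Continuous (ohcl a b) := by
  unfold ohcl
  fun_prop

structure OHData (γ T : ℝ) (u : ℝ → ℝ → ℝ) : Prop where
  hγ : 0 < γ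
  sol : IsLineOHSolution γ (Ico 0 T) u
  vL2 : ∀ t ∈ Ico (0 : ℝ) T, Integrable (fun x => ohv u t x ^ 2)
  vtop : ∀ t ∈ Ico (0 : ℝ) T, Tendsto (ohv u t) atTop (nhds 0)
  vbot : ∀ t ∈ Ico (0 : ℝ) T, Tendsto (ohv u t) atBot (nhds 0)

namespace OHData
variable {γ T : ℝ} {u : ℝ → ℝ → ℝ}

lemma cu (h : OHData γ T u) {t : ℝ} (ht : t ∈ Ico 0 T) : Continuous (u t) :=
  continuous_iff_continuousAt.2 fun x => (h.sol.diff_x t ht x).continuousAt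

lemma v_abs (h : OHData γ T u) {t : ℝ} (ht : t ∈ Ico 0 T) (x : ℝ) : |ohv u t x| ≤ ∫ y, |u t y| := by
  refine (MeasureTheory.abs_integral_le_integral_abs).trans ?_
  exact setIntegral_le_integral (h.sol.integrable t ht).abs (by filter_upwards with y; positivity)

lemma v_diff (h : OHData γ T u) {t : ℝ} (ht : t ∈ Ico 0 T) (x y : ℝ) :
    ohv u t y - ohv u t x = ∫ z in x..y, u t z :=
  intervalIntegral.integral_Iic_sub_Iic (h.sol.integrable t ht).integrableOn
    (h.sol.integrable t ht).integrableOn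

lemma dv (h : OHData γ T u) {t : ℝ} (ht : t ∈ Ico 0 T) (x : ℝ) :
    HasDerivAt (ohv u t) (u t x) x := by
  have e : ohv u t = fun x => ohv u t 0 + ∫ z in (0:ℝ)..x, u t z := by
    ext x
    rw [← h.v_diff ht 0 x]; ring
  rw [e]
  exact (((h.cu ht).integral_hasStrictDerivAt 0 x).hasDerivAt).const_add _

lemma build (h : OHData γ T u) {a b : ℝ} (ha : 0 ≤ a) (hab : a ≤ b) (hb : b < T)
    (heq : ∀ t ∈ Icc a b, ∀ x, deriv (fun s => u s x) t + u t x * deriv (u t) x = γ * ohv u t x) :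
    OHSol γ a b (fun t => u (ohcl a b t)) (fun t => deriv (u (ohcl a b t)))
      (fun t => ohv u (ohcl a b t)) := by
  have hm : ∀ t ∈ Icc a b, t ∈ Ico 0 T := fun t ht => ⟨ha.trans ht.1, ht.2.trans_lt hb⟩
  have hc : ∀ t, ohcl a b t ∈ Ico 0 T := fun t => hm _ (ohcl_mem hab t)
  have hγ := h.hγ
  have comp : ∀ {g : ℝ × ℝ → ℝ}, ContinuousOn g (Ico 0 T ×ˢ univ) →
      Continuous (fun p : ℝ × ℝ => g (ohcl a b p.1, p.2)) := by
    intro g hg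
    refine hg.comp_continuous (((ohcl_cont a b).comp continuous_fst).prodMk continuous_snd) ?_
    intro p
    exact ⟨hc _, mem_univ _⟩
  exact {
    hγ := hγ
    hab := hab
    cU := comp h.sol.cont_u
    cUx := comp h.sol.cont_ux
    cV := by
      have c := (comp h.sol.cont_ut).add ((comp h.sol.cont_u).mul (comp h.sol.cont_ux))
      have c2 := c.div_const γ
      refine c2.congr fun p => ?_
      simp only [Pi.add_apply, Pi.mul_apply]
      rw [heq _ (ohcl_mem hab p.1) p.2]
      field_simp
    dx := fun t x => (h.sol.diff_x _ (hc t) x).hasDerivAt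
    dV := fun t x => h.dv (hc t) x
    dt := by
      intro t ht x
      simp only [ohcl_eq ht]
      rw [← heq t ht x, add_sub_cancel_right]
      refine ((h.sol.diff_t t (hm t ht) x).hasDerivAt.hasDerivWithinAt).congr (fun s hs => ?_) ?_
      · rw [ohcl_eq hs]
      · rw [ohcl_eq ht]
    Vtop := fun t => h.vtop _ (hc t)
    Vbot := fun t => h.vbot _ (hc t)
    intU := fun t => h.sol.integrable _ (hc t)
    intV := fun t => h.vL2 _ (hc t) }

lemma heq (h : OHData γ T u) {a b : ℝ} (ha : 0 < a) (hb : b < T) : ∀ t ∈ Icc a b, ∀ x,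
    deriv (fun s => u s x) t + u t x * deriv (u t) x = γ * ohv u t x := fun t ht x =>
  h.sol.eqn t ⟨ha.le.trans ht.1, ht.2.trans_lt hb⟩ (ha.trans_le ht.1) x

/-- local boundedness in time -/
def LB (u : ℝ → ℝ → ℝ) (t : ℝ) : Prop :=
  ∃ δ > 0, ∃ S, ∀ r ∈ Ioo (t - δ) (t + δ), ∀ x, |ohv u r x| ≤ S

lemma LB_open (u : ℝ → ℝ → ℝ) : IsOpen {t | LB u t} := by
  rw [Metric.isOpen_iff]
  rintro t ⟨δ, hδ, S, hS⟩
  refine ⟨δ / 2, by positivity, fun r hr => ⟨δ / 2, by positivity, S, fun q hq x => hS q ?_ x⟩⟩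
  rw [Metric.mem_ball, Real.dist_eq, abs_lt] at hr
  constructor <;> linarith [hr.1, hr.2, hq.1, hq.2]

lemma LB_compact {a b : ℝ} (hl : ∀ t ∈ Icc a b, LB u t) :
    ∃ S, ∀ t ∈ Icc a b, ∀ x, |ohv u t x| ≤ S := by
  refine isCompact_Icc.induction_on (p := fun s => ∃ S, ∀ t ∈ s, ∀ x, |ohv u t x| ≤ S) ?_ ?_ ?_ ?_
  · exact ⟨0, by simp⟩
  · rintro s t hst ⟨S, hS⟩
    exact ⟨S, fun r hr => hS r (hst hr)⟩
  · rintro s t ⟨S, hS⟩ ⟨S', hS'⟩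
    refine ⟨max S S', ?_⟩
    rintro r (hr | hr) x
    · exact (hS r hr x).trans (le_max_left _ _)
    · exact (hS' r hr x).trans (le_max_right _ _)
  · intro t ht
    obtain ⟨δ, hδ, S, hS⟩ := hl t ht
    exact ⟨Ioo (t - δ) (t + δ), mem_nhdsWithin_of_mem_nhds (Ioo_mem_nhds (by linarith) (by linarith)),
      S, hS⟩

lemma ext1 (h : OHData γ T u) {a b S : ℝ} (ha : 0 < a) (hab : a < b) (hb : b < T)
    (hS : ∀ t ∈ Icc a b, ∀ x, |ohv u t x| ≤ S) {t0 : ℝ} (ht0 : t0 ∈ Icc a b) {t : ℝ}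
    (ht : t ∈ Icc a b) :
    (∀ x, |ohv u t x| ≤ 1 + ((∫ x, ohv u t0 x ^ 2) + ∫ x, u t0 x ^ 2) / 2
      + (∫ x, u t0 x ^ 2) * (b - a) / 2) := by
  intro x
  have B := h.build ha.le hab.le hb (h.heq ha hb)
  have := B.ext_bound (S := S) (fun t ht x => by simpa only [ohcl_eq ht] using hS t ht x) hab ht0 ht x
  simpa only [ohcl_eq ht, ohcl_eq ht0] using this

lemma ext (h : OHData γ T u) {α β : ℝ} (hα : 0 ≤ α) (hαβ : α < β) (hβ : β ≤ T)
    (hl : ∀ t ∈ Ioo α β, LB u t) : ∃ S, ∀ t ∈ Ioo α β, ∀ x, |ohv u t x| ≤ S := by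
  set t0 := (α + β) / 2 with ht0
  refine ⟨1 + ((∫ x, ohv u t0 x ^ 2) + ∫ x, u t0 x ^ 2) / 2
      + (∫ x, u t0 x ^ 2) * (β - α) / 2, fun t ht x => ?_⟩
  have ht0m : t0 ∈ Ioo α β := by constructor <;> rw [ht0] <;> linarith
  have m1 := min_le_left t t0
  have m2 := min_le_right t t0
  have m3 := le_max_left t t0
  have m4 := le_max_right t t0
  have m5 : α < min t t0 := lt_min ht.1 ht0m.1
  have m6 : max t t0 < β := max_lt ht.2 ht0m.2
  obtain ⟨S, hS⟩ := LB_compact (u := u) (a := min t t0) (b := (max t t0 + β) / 2)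
    (fun r hr => hl r ⟨by linarith [hr.1], by linarith [hr.2]⟩)
  refine (h.ext1 (by linarith) (by linarith) (by linarith) hS (t0 := t0)
    ⟨m2, by linarith⟩ (t := t) ⟨m1, by linarith⟩ x).trans ?_
  have hQ0 : 0 ≤ ∫ x, u t0 x ^ 2 := integral_nonneg fun x => by positivity
  have : (∫ x, u t0 x ^ 2) * ((max t t0 + β) / 2 - min t t0) ≤ (∫ x, u t0 x ^ 2) * (β - α) :=
    mul_le_mul_of_nonneg_left (by linarith) hQ0
  linarith

lemma gap1 (h : OHData γ T u) {K : ℝ} (hK : 1 ≤ K) : ∃ C : ℝ, ∀ a b S, 0 < a → a < b → b < T →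
    b - a ≤ 1 → 2 * γ * K * (b - a) ≤ 1 → (∀ t ∈ Ioo a b, ∀ x, |ohv u t x| ≤ S) →
    ∫ x, |u a x| ≤ K → ∫ x, ohv u a x ^ 2 ≤ K → ∀ x, |ohv u b x| ≤ C := by
  obtain ⟨C, hC⟩ := OHSol.gap γ K hK
  refine ⟨C, fun a b S ha hab hb hl1 hl2 hS hU hV x => ?_⟩
  have B := h.build ha.le hab.le hb (h.heq ha hb)
  have ma : a ∈ Icc a b := ⟨le_refl _, hab.le⟩
  have mb : b ∈ Icc a b := ⟨hab.le, le_refl _⟩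
  have ta : a ∈ Ico 0 T := ⟨ha.le, hab.trans hb⟩
  have tb : b ∈ Ico 0 T := ⟨ha.le.trans hab.le, hb⟩
  have := hC a b _ _ _ (max S (max (∫ y, |u a y|) (∫ y, |u b y|))) B ?_ hab hl1 hl2
    (by simpa only [ohcl_eq ma] using hU) (by simpa only [ohcl_eq ma] using hV)
    (fun x => by simpa only [ohcl_eq ma] using (h.v_abs ta x).trans hU) b mb x
  · simpa only [ohcl_eq mb] using this
  · intro t ht x
    simp only [ohcl_eq ht]
    rcases eq_or_lt_of_le ht.1 with e | e
    · rw [← e]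
      exact (h.v_abs ta x).trans ((le_max_left _ _).trans (le_max_right _ _))
    rcases eq_or_lt_of_le ht.2 with e' | e'
    · rw [e']
      exact (h.v_abs tb x).trans ((le_max_right _ _).trans (le_max_right _ _))
    · exact (hS t ⟨e, e'⟩ x).trans (le_max_left _ _)

lemma baire (h : OHData γ T u) {p : ℝ} (hp : p ∈ Ioo 0 T) (hN : ¬ LB u p) {ε : ℝ → ℝ}
    (hε : ∀ K, 0 < ε K) :
    ∃ i0 i1 K : ℝ, 0 < i0 ∧ i1 < T ∧ 1 ≤ K ∧ i1 - i0 ≤ ε K ∧ (∃ q ∈ Ioo i0 i1, ¬ LB u q) ∧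
      ∀ q ∈ Ioo i0 i1, ¬ LB u q → ∫ x, |u q x| ≤ K ∧ ∫ x, ohv u q x ^ 2 ≤ K := by
  obtain ⟨δ, hδ, hδ0, hδT⟩ : ∃ δ > 0, 0 < p - δ ∧ p + δ < T := by
    refine ⟨min p (T - p) / 2, ?_, ?_, ?_⟩
    · have := lt_min hp.1 (sub_pos.2 hp.2); positivity
    · linarith [min_le_left p (T - p), hp.1]
    · linarith [min_le_right p (T - p), hp.2]
  have B := h.build hδ0.le (by linarith : p - δ ≤ p + δ) hδT (h.heq hδ0 hδT)
  set a := p - δ with ha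
  set b := p + δ with hb
  set Z := closure ({t | ¬ LB u t} ∩ Ioo a b) with hZ
  have hZs : Z ⊆ {t | ¬ LB u t} ∩ Icc a b := by
    apply closure_minimal
    · exact inter_subset_inter_right _ Ioo_subset_Icc_self
    · exact (LB_open u).isClosed_compl.inter isClosed_Icc
  have hZc : IsCompact Z := isCompact_Icc.of_isClosed_subset isClosed_closure
    (hZs.trans inter_subset_right)
  have : CompactSpace Z := isCompact_iff_compactSpace.1 hZc
  have : Nonempty Z := ⟨⟨p, subset_closure ⟨hN, by linarith, by linarith⟩⟩⟩
  set F : ℕ → Set ℝ := fun n => {t | ∀ R : ℝ, (∫ x in (-R)..R, |u (ohcl a b t) x|) ≤ n ∧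
    (∫ x in (-R)..R, ohv u (ohcl a b t) x ^ 2) ≤ n} with hF
  have hFc : ∀ n, IsClosed (F n) := by
    intro n
    simp only [hF, ofPred_forall]
    refine isClosed_iInter fun R => ?_
    refine IsClosed.and ?_ ?_
    · refine isClosed_le ?_ continuous_const
      exact intervalIntegral.continuous_parametric_intervalIntegral_of_continuous'
        (f := fun t x => |u (ohcl a b t) x|) B.cU.abs _ _
    · refine isClosed_le ?_ continuous_const
      exact intervalIntegral.continuous_parametric_intervalIntegral_of_continuous'
        (f := fun t x => ohv u (ohcl a b t) x ^ 2)
        (by have c := B.cV; simp only [Function.uncurry_def]; fun_prop) _ _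
  have hcov : ⋃ n, ((↑) : Z → ℝ) ⁻¹' F n = univ := by
    apply eq_univ_of_forall
    intro z
    rw [mem_iUnion]
    obtain ⟨n, hn⟩ := exists_nat_ge (max (∫ x, |u (ohcl a b z) x|) (∫ x, ohv u (ohcl a b z) x ^ 2))
    refine ⟨n, fun R => ⟨?_, ?_⟩⟩
    · refine le_trans ?_ ((le_max_left _ _).trans hn)
      rcases le_total 0 R with hR | hR
      · rw [intervalIntegral.integral_of_le (by linarith)]
        exact setIntegral_le_integral (B.intU z).abs (by filter_upwards with y; positivity)
      · refine le_trans ?_ (integral_nonneg fun x => abs_nonneg _)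
        rw [intervalIntegral.integral_symm]
        exact neg_nonpos.2 (intervalIntegral.integral_nonneg (by linarith) fun x _ => abs_nonneg _)
    · refine le_trans ?_ ((le_max_right _ _).trans hn)
      rcases le_total 0 R with hR | hR
      · rw [intervalIntegral.integral_of_le (by linarith)]
        exact setIntegral_le_integral (B.intV z) (by filter_upwards with y; positivity)
      · refine le_trans ?_ (integral_nonneg fun x => sq_nonneg _)
        rw [intervalIntegral.integral_symm]
        exact neg_nonpos.2 (intervalIntegral.integral_nonneg (by linarith) fun x _ => sq_nonneg _)
  obtain ⟨n, z, hz⟩ := nonempty_interior_of_iUnion_of_closed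
    (fun n => (hFc n).preimage continuous_subtype_val) hcov
  rw [mem_interior_iff_mem_nhds, nhds_subtype_eq_comap, mem_comap] at hz
  obtain ⟨W, hW, hWF⟩ := hz
  obtain ⟨ρ, hρ, hρW⟩ := Metric.mem_nhds_iff.1 hW
  -- a point of the bad set close to z
  set K : ℝ := max n 1 with hK
  obtain ⟨q, ⟨hq1, hq2⟩, hq3⟩ := Metric.mem_closure_iff.1 z.2 ρ hρ
  have hqW : q ∈ Metric.ball (z : ℝ) ρ := by rw [Metric.mem_ball, dist_comm]; exact hq3
  obtain ⟨η, hη, hηs⟩ := Metric.isOpen_iff.1 (Metric.isOpen_ball.inter isOpen_Ioo) q ⟨hqW, hq2⟩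
  set d := min (η / 2) (ε K / 2) with hd
  have hd0 : 0 < d := lt_min (by positivity) (by have := hε K; positivity)
  have hd1 : d < η := (min_le_left _ _).trans_lt (by linarith)
  have hsub : ∀ r ∈ Ioo (q - d) (q + d), r ∈ Metric.ball (z : ℝ) ρ ∩ Ioo a b := by
    intro r hr
    apply hηs
    rw [Metric.mem_ball, Real.dist_eq, abs_lt]
    constructor <;> linarith [hr.1, hr.2]
  have hsub2 : Icc (q - d) (q + d) ⊆ Icc a b := by
    rw [← closure_Ioo (by linarith), ← closure_Ioo (by linarith : a ≠ b)]
    exact closure_mono fun r hr => (hsub r hr).2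
  refine ⟨q - d, q + d, K, ?_, ?_, le_max_right _ _, ?_, ⟨q, ⟨by linarith, by linarith⟩, hq1⟩, ?_⟩
  · exact hδ0.trans_le (hsub2 ⟨le_refl _, by linarith⟩).1
  · exact (hsub2 ⟨by linarith, le_refl _⟩).2.trans_lt hδT
  · linarith [min_le_right (η / 2) (ε K / 2)]
  · intro r hr hrN
    obtain ⟨hr1, hr2⟩ := hsub r hr
    have hrF : r ∈ F n := by
      have := @hWF ⟨r, subset_closure ⟨hrN, hr2⟩⟩ (hρW hr1)
      exact this
    have er := ohcl_eq (Ioo_subset_Icc_self hr2)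
    simp only [hF, mem_ofPred_eq, er] at hrF
    have i1 := B.intU r
    have i2 := B.intV r
    simp only [er] at i1 i2
    refine ⟨le_trans ?_ (le_max_left _ _), le_trans ?_ (le_max_left _ _)⟩
    · exact le_of_tendsto (intervalIntegral_tendsto_integral i1.abs tendsto_neg_atTop_atBot tendsto_id)
        (by filter_upwards with R; exact (hrF R).1)
    · exact le_of_tendsto (intervalIntegral_tendsto_integral i2 tendsto_neg_atTop_atBot tendsto_id)
        (by filter_upwards with R; exact (hrF R).2)

lemma allLB (h : OHData γ T u) {p : ℝ} (hp : p ∈ Ioo 0 T) : LB u p := by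
  by_contra hN
  have hγ := h.hγ
  obtain ⟨i0, i1, K, hi0, hi1, hK, hε, ⟨q, hq, hqN⟩, hb⟩ := h.baire hp hN
    (ε := fun K => min 1 (1 / (2 * γ * (|K| + 1)))) (fun K => lt_min one_pos (by positivity))
  have hl1 : i1 - i0 ≤ 1 := hε.trans (min_le_left _ _)
  have hl2 : 2 * γ * K * (i1 - i0) ≤ 1 := by
    have h1 := hε.trans (min_le_right _ _)
    rw [le_div_iff₀ (by positivity), abs_of_nonneg (by linarith)] at h1
    have : 0 ≤ γ * (i1 - i0) := mul_nonneg hγ.le (by linarith [hq.1, hq.2])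
    linarith
  obtain ⟨C, hC⟩ := h.gap1 hK
  have claim : ∀ p0 ∈ Ioo i0 i1, ¬ LB u p0 → ∀ t ∈ Ico p0 i1, ∀ x, |ohv u t x| ≤ max C K := by
    intro p0 hp0 hp0N t ht x
    have htI : t ∈ Ioo i0 i1 := ⟨hp0.1.trans_le ht.1, ht.2⟩
    by_cases htN : LB u t
    · have hcomp : IsCompact ({t | ¬ LB u t} ∩ Icc p0 t) :=
        isCompact_Icc.inter_left (LB_open u).isClosed_compl
      have hα := hcomp.sSup_mem ⟨p0, hp0N, le_refl _, ht.1⟩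
      set α := sSup ({t | ¬ LB u t} ∩ Icc p0 t) with hαd
      have hαt : α < t := lt_of_le_of_ne hα.2.2 (fun e => hα.1 (e ▸ htN))
      have hαI : α ∈ Ioo i0 i1 := ⟨hp0.1.trans_le hα.2.1, hαt.trans htI.2⟩
      have hfree : ∀ r ∈ Ioo α t, LB u r := by
        intro r hr
        by_contra hrN
        have := le_csSup hcomp.bddAbove (show r ∈ {t | ¬ LB u t} ∩ Icc p0 t from
          ⟨hrN, hα.2.1.trans hr.1.le, hr.2.le⟩)
        linarith [hr.1]
      have hα0 : 0 < α := hi0.trans hαI.1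
      obtain ⟨S, hS⟩ := h.ext hα0.le hαt (htI.2.trans hi1).le hfree
      refine (hC α t S hα0 hαt (htI.2.trans hi1) (by linarith [hαI.1, htI.2]) ?_ hS
        (hb α hαI hα.1).1 (hb α hαI hα.1).2 x).trans (le_max_left _ _)
      refine le_trans ?_ hl2
      apply mul_le_mul_of_nonneg_left _ (by positivity)
      linarith [hαI.1, htI.2]
    · exact (h.v_abs ⟨(hi0.trans htI.1).le, htI.2.trans hi1⟩ x).trans
        ((hb t htI htN).1.trans (le_max_right _ _))
  by_cases hex : ∃ p0 ∈ Ioo i0 q, ¬ LB u p0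
  · obtain ⟨p0, hp0, hp0N⟩ := hex
    apply hqN
    have m1 := min_le_left (q - p0) (i1 - q)
    have m2 := min_le_right (q - p0) (i1 - q)
    exact ⟨min (q - p0) (i1 - q), lt_min (by linarith [hp0.2]) (by linarith [hq.2]), max C K,
      fun r hr => claim p0 ⟨hp0.1, hp0.2.trans hq.2⟩ hp0N r
        ⟨by linarith [hr.1], by linarith [hr.2]⟩⟩
  · push Not at hex
    obtain ⟨S, hS⟩ := h.ext hi0.le hq.1 (hq.2.trans hi1).le hex
    apply hqN
    have m1 := min_le_left (q - i0) (i1 - q)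
    have m2 := min_le_right (q - i0) (i1 - q)
    refine ⟨min (q - i0) (i1 - q), lt_min (by linarith [hq.1]) (by linarith [hq.2]),
      max S (max C K), fun r hr x => ?_⟩
    rcases lt_or_ge r q with hrq | hrq
    · exact (hS r ⟨by linarith [hr.1], hrq⟩ x).trans (le_max_left _ _)
    · exact (claim q hq hqN r ⟨hrq, by linarith [hr.2]⟩ x).trans (le_max_right _ _)

/-- `v` is bounded on all of `(0,T)` -/
lemma bdd (h : OHData γ T u) (hT : 0 < T) : ∃ S, ∀ t ∈ Ioo 0 T, ∀ x, |ohv u t x| ≤ S :=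
  h.ext (le_refl 0) hT (le_refl T) fun _ ht => h.allLB ht

end OHData

open MeasureTheory Filter Set intervalIntegral

lemma oh_le_zero {f : ℝ → ℝ} (cf : Continuous f) {b N : ℝ} (hb : 0 < b)
    (hf : ∀ t ∈ Ioc 0 b, f t ≤ N) : f 0 ≤ N := by
  have l : Tendsto f (nhdsWithin 0 (Ioi 0)) (nhds (f 0)) := cf.continuousAt.mono_left nhdsWithin_le_nhds
  exact le_of_tendsto l (by filter_upwards [Ioc_mem_nhdsGT hb] with t ht using hf t ht)

namespace OHData
variable {γ T : ℝ} {u : ℝ → ℝ → ℝ}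

lemma N_bdd (h : OHData γ T u) {b : ℝ} (hb : 0 < b) (hbT : b < T) :
    ∃ N, ∀ t ∈ Ioc 0 b, ∫ x, ohv u t x ^ 2 ≤ N := by
  obtain ⟨S, hS⟩ := h.bdd (hb.trans hbT)
  refine ⟨(∫ x, ohv u b x ^ 2) + S * (∫ x, u b x ^ 2) * b, fun t ht => ?_⟩
  have B := h.build ht.1.le ht.2 hbT (h.heq ht.1 hbT)
  have mt : t ∈ Icc t b := ⟨le_refl _, ht.2⟩
  have mb : b ∈ Icc t b := ⟨ht.2, le_refl _⟩
  have hS' : ∀ r ∈ Icc t b, ∀ x, |ohv u (ohcl t b r) x| ≤ S := fun r hr x => by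
    rw [ohcl_eq hr]
    exact hS r ⟨ht.1.trans_le hr.1, hr.2.trans_lt hbT⟩ x
  have hS0 : 0 ≤ S := (abs_nonneg _).trans (hS b ⟨hb, hbT⟩ 0)
  have h1 := (abs_le.1 (B.N_diff hS' mt mb)).1
  have h2 := B.Q_cons hS' mt mb
  simp only [ohcl_eq mt, ohcl_eq mb] at h1 h2
  rw [← h2] at h1
  have hQ0 : 0 ≤ ∫ x, u b x ^ 2 := integral_nonneg fun x => by positivity
  have h3 : S * (∫ x, u b x ^ 2) * |b - t| ≤ S * (∫ x, u b x ^ 2) * b := by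
    apply mul_le_mul_of_nonneg_left _ (mul_nonneg hS0 hQ0)
    rw [abs_of_nonneg (by linarith [ht.2])]; linarith [ht.1]
  linarith

lemma heq0 (h : OHData γ T u) (hT : 0 < T) (x : ℝ) :
    deriv (fun s => u s x) 0 + u 0 x * deriv (u 0) x = γ * ohv u 0 x := by
  have hγ := h.hγ
  set b := T / 2 with hb
  have hb0 : 0 < b := by positivity
  have hbT : b < T := by rw [hb]; linarith
  have m0 : (0:ℝ) ∈ Icc 0 b := ⟨le_refl _, hb0.le⟩
  have t0 : (0:ℝ) ∈ Ico 0 T := ⟨le_refl _, hT⟩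
  have comp : ∀ {g : ℝ × ℝ → ℝ}, ContinuousOn g (Ico 0 T ×ˢ univ) →
      Continuous (fun p : ℝ × ℝ => g (ohcl 0 b p.1, p.2)) := by
    intro g hg
    refine hg.comp_continuous (((ohcl_cont 0 b).comp continuous_fst).prodMk continuous_snd) ?_
    intro p
    have := ohcl_mem hb0.le p.1
    exact ⟨⟨this.1, this.2.trans_lt hbT⟩, mem_univ _⟩
  set w : ℝ → ℝ → ℝ := fun t x => (deriv (fun s => u s x) (ohcl 0 b t) +
    u (ohcl 0 b t) x * deriv (u (ohcl 0 b t)) x) / γ with hw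
  have cw : Continuous (fun p : ℝ × ℝ => w p.1 p.2) :=
    ((comp h.sol.cont_ut).add ((comp h.sol.cont_u).mul (comp h.sol.cont_ux))).div_const γ
  have cu : Continuous (fun p : ℝ × ℝ => u (ohcl 0 b p.1) p.2) := comp h.sol.cont_u
  have ewt : ∀ t ∈ Ioc 0 b, ∀ x, w t x = ohv u t x := by
    intro t ht x
    simp only [hw, ohcl_eq (Ioc_subset_Icc_self ht)]
    rw [h.sol.eqn t ⟨ht.1.le, ht.2.trans_lt hbT⟩ ht.1 x, mul_div_cancel_left₀ _ hγ.ne']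
    rfl
  have wsec : ∀ x, Continuous (fun t => w t x) := fun x =>
    cw.comp (by fun_prop : Continuous fun t : ℝ => (t, x))
  -- differences
  have dif : ∀ y z, w 0 z - w 0 y = ohv u 0 z - ohv u 0 y := by
    intro y z
    set f : ℝ → ℝ := fun t => w t z - w t y - ∫ ξ in y..z, u (ohcl 0 b t) ξ with hf
    have cf : Continuous f := ((wsec z).sub (wsec y)).sub
      (intervalIntegral.continuous_parametric_intervalIntegral_of_continuous' (f := fun t x => u (ohcl 0 b t) x) cu _ _)
    have fz : ∀ t ∈ Ioc 0 b, f t = 0 := by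
      intro t ht
      simp only [hf]
      rw [ewt t ht, ewt t ht, ohcl_eq (Ioc_subset_Icc_self ht),
        ← h.v_diff ⟨ht.1.le, ht.2.trans_lt hbT⟩]
      ring
    have f1 := oh_le_zero cf hb0 (fun t ht => (fz t ht).le)
    have f2 := oh_le_zero cf.neg (N := 0) hb0 (fun t ht => by simp [fz t ht])
    have f3 : f 0 = 0 := le_antisymm f1 (by simpa using f2)
    simp only [hf, ohcl_eq m0] at f3
    rw [← h.v_diff t0] at f3
    linarith
  obtain ⟨N, hN⟩ := h.N_bdd hb0 hbT
  set c := w 0 0 - ohv u 0 0 with hc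
  have hcx : ∀ x, w 0 x = ohv u 0 x + c := fun x => by
    have := dif 0 x
    linarith
  have w0c : Continuous (w 0) := cw.comp (by fun_prop : Continuous fun x : ℝ => ((0:ℝ), x))
  have v0c : Continuous (ohv u 0) :=
    continuous_iff_continuousAt.2 fun x => (h.dv t0 x).continuousAt
  have hR : ∀ R : ℝ, 0 ≤ R → 2 * R * c ^ 2 ≤ 2 * N + 2 * ∫ x, ohv u 0 x ^ 2 := by
    intro R hR
    have i1 : ∫ x in (-R)..R, w 0 x ^ 2 ≤ N := by
      refine oh_le_zero (f := fun t => ∫ x in (-R)..R, w t x ^ 2)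
        (intervalIntegral.continuous_parametric_intervalIntegral_of_continuous'
          (f := fun t x => w t x ^ 2) (by simp only [Function.uncurry_def]; fun_prop) _ _) hb0 ?_
      intro t ht
      simp only [ewt t ht]
      refine le_trans ?_ (hN t ht)
      rw [intervalIntegral.integral_of_le (by linarith)]
      exact setIntegral_le_integral (h.vL2 t ⟨ht.1.le, ht.2.trans_lt hbT⟩)
        (by filter_upwards with y; positivity)
    have i2 : ∫ x in (-R)..R, ohv u 0 x ^ 2 ≤ ∫ x, ohv u 0 x ^ 2 := by
      rw [intervalIntegral.integral_of_le (by linarith)]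
      exact setIntegral_le_integral (h.vL2 0 t0) (by filter_upwards with y; positivity)
    have i3 : ∫ x in (-R)..R, c ^ 2 ≤ ∫ x in (-R)..R, (2 * w 0 x ^ 2 + 2 * ohv u 0 x ^ 2) := by
      apply intervalIntegral.integral_mono_on (by linarith) intervalIntegrable_const
        (Continuous.intervalIntegrable (by fun_prop) _ _)
      intro x _
      have : c = w 0 x - ohv u 0 x := by rw [hcx]; ring
      rw [this]
      nlinarith [sq_nonneg (w 0 x + ohv u 0 x)]
    rw [intervalIntegral.integral_add (Continuous.intervalIntegrable (by fun_prop) _ _)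
      (Continuous.intervalIntegrable (by fun_prop) _ _), intervalIntegral.integral_const_mul,
      intervalIntegral.integral_const_mul, intervalIntegral.integral_const, smul_eq_mul] at i3
    linarith
  have hc0 : c = 0 := by
    by_contra hne
    have hpos : 0 < c ^ 2 := by positivity
    set J := 2 * N + 2 * ∫ x, ohv u 0 x ^ 2 with hJ
    have h0 := hR 0 (le_refl _)
    have h1 := hR ((J + 1) / c ^ 2) (div_nonneg (by linarith) hpos.le)
    have h2 : 2 * ((J + 1) / c ^ 2) * c ^ 2 = 2 * (J + 1) := by field_simp
    rw [h2] at h1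
    linarith
  have := hcx x
  rw [hc0, add_zero] at this
  simp only [hw, ohcl_eq m0] at this
  rw [div_eq_iff hγ.ne'] at this
  linarith

lemma build0 (h : OHData γ T u) {t : ℝ} (ht0 : 0 ≤ t) (ht : t < T) :
    OHSol γ 0 t (fun r => u (ohcl 0 t r)) (fun r => deriv (u (ohcl 0 t r)))
      (fun r => ohv u (ohcl 0 t r)) := by
  refine h.build (le_refl _) ht0 ht fun r hr x => ?_
  rcases eq_or_lt_of_le hr.1 with e | e
  · rw [← e]; exact h.heq0 (ht0.trans_lt ht) x
  · exact h.sol.eqn r ⟨hr.1, hr.2.trans_lt ht⟩ e x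

end OHData

lemma oh_alg2 {D X Y : ℝ} (hX : 0 ≤ X) (hY : 0 ≤ Y) (h : 0 ≤ D → D ^ 2 ≤ X ^ 2 + Y * D) : D ≤ X + Y := by
  by_contra hcon
  push Not at hcon
  have hD : 0 < D := by linarith
  have := h hD.le
  nlinarith

/-- the a priori estimate in the regularised setting -/
lemma OHSol.final {γ t : ℝ} {U Ux V : ℝ → ℝ → ℝ} (h : OHSol γ 0 t U Ux V) (ht : 0 < t)
    {S : ℝ} (hS : ∀ r ∈ Icc 0 t, ∀ x, |V r x| ≤ S) {M0 : ℝ} (hM0 : ∀ x, |U 0 x| ≤ M0)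
    {Q E : ℝ} (hQ : Q = ∫ x, U 0 x ^ 2) (hE : E = ∫ x, (γ * V 0 x ^ 2 + (1/3) * U 0 x ^ 3))
    {s : ℝ} (hs : s ∈ Icc 0 t) (x : ℝ) :
    |U s x| ≤ M0 + Real.sqrt γ / Real.sqrt 2 * Real.sqrt (E + γ * Q + (1/3) * Q * M0) * t
      + γ * Q / 6 * t ^ 2 := by
  have hγ := h.hγ
  have m0 : (0:ℝ) ∈ Icc 0 t := ⟨le_refl _, ht.le⟩
  obtain ⟨M, hM⟩ := h.exists_bound hS ht
  set A : Set ℝ := {r | ∃ s ∈ Icc 0 t, ∃ x, r = |U s x|} with hA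
  have ne : A.Nonempty := ⟨_, 0, m0, 0, rfl⟩
  have bd : BddAbove A := ⟨M, by rintro r ⟨t, ht, x, rfl⟩; exact hM t ht x⟩
  set m := sSup A with hm
  have ub : ∀ r ∈ Icc 0 t, ∀ x, |U r x| ≤ m := fun r hr x => le_csSup bd ⟨r, hr, x, rfl⟩
  have hQ0 : 0 ≤ Q := by rw [hQ]; exact integral_nonneg fun x => by positivity
  have cubeLow : ∀ r ∈ Icc 0 t, ∀ μ, (∀ x, |U r x| ≤ μ) → - (μ * Q) ≤ ∫ x, U r x ^ 3 := by
    intro r hr μ hμ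
    have i2 := h.int_sq (hM r hr)
    have i3 := h.int_cube (hM r hr)
    have e1 : - (μ * Q) = ∫ x, - (μ * U r x ^ 2) := by
      rw [MeasureTheory.integral_neg, MeasureTheory.integral_const_mul, hQ, h.Q_cons hS m0 hr]
    rw [e1]
    refine integral_mono (i2.const_mul μ).neg i3 fun x => ?_
    have := (abs_le.1 (hμ x)).1
    simp only
    nlinarith [sq_nonneg (U r x)]
  have hEs : E = γ * (∫ x, V 0 x ^ 2) + (1/3) * ∫ x, U 0 x ^ 3 := by
    rw [hE, MeasureTheory.integral_add ((h.intV 0).const_mul γ) ((h.int_cube (hM 0 m0)).const_mul _),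
      MeasureTheory.integral_const_mul, MeasureTheory.integral_const_mul]
  have hcons : ∀ r ∈ Icc 0 t, γ * (∫ x, V r x ^ 2) + (1/3) * (∫ x, U r x ^ 3) = E := by
    intro r hr
    rw [hEs]
    rcases eq_or_lt_of_le hr.1 with e | e
    · rw [← e]
    · have c1 := h.N_ident hS (le_refl 0) e hr.2
      have c2 := h.cubic hS (le_refl 0) e hr.2
      have c3 : γ * ((∫ x, V r x ^ 2) - ∫ x, V 0 x ^ 2) = γ * (- ∫ r in (0:ℝ)..r, ∫ x, V r x * U r x ^ 2) := by
        rw [c1]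
      linarith
  set z := E + γ * Q + (1/3) * Q * M0 with hz
  have hz0 : 0 ≤ z := by
    have k1 := cubeLow 0 m0 M0 hM0
    have k2 : 0 ≤ γ * ∫ x, V 0 x ^ 2 := mul_nonneg hγ.le (integral_nonneg fun x => by positivity)
    have k3 : 0 ≤ γ * Q := by positivity
    rw [hz, hEs]
    linarith
  set C := Real.sqrt γ / Real.sqrt 2 * Real.sqrt z with hC
  have hC0 : 0 ≤ C := by positivity
  have hC2 : C ^ 2 = γ / 2 * z := by
    rw [hC, mul_pow, div_pow, Real.sq_sqrt hγ.le, Real.sq_sqrt (by norm_num), Real.sq_sqrt hz0]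
  set D := m - M0 with hD
  set G2 := γ / 2 * (z + (1/3) * Q * D) with hG2
  have hV2 : ∀ r ∈ Icc 0 t, ∀ x, (γ * V r x) ^ 2 ≤ G2 := by
    intro r hr x
    have k1 := h.V_sq_le (hM r hr) x
    rw [h.Q_cons hS m0 hr, ← hQ] at k1
    have k2 := cubeLow r hr m (ub r hr)
    have k3 := hcons r hr
    have k4 : γ * (∫ x, V r x ^ 2) ≤ E + (1/3) * (m * Q) := by linarith
    have k5 : γ ^ 2 * V r x ^ 2 ≤ γ ^ 2 * (((∫ x, V r x ^ 2) + Q) / 2) :=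
      mul_le_mul_of_nonneg_left k1 (by positivity)
    have k6 : γ * (γ * (∫ x, V r x ^ 2)) ≤ γ * (E + (1/3) * (m * Q)) :=
      mul_le_mul_of_nonneg_left k4 hγ.le
    have k7 : G2 = γ / 2 * (E + γ * Q + (1/3) * (m * Q)) := by
      rw [hG2, hz, hD]; ring
    rw [k7]
    nlinarith
  have hG20 : 0 ≤ G2 := (sq_nonneg _).trans (hV2 0 m0 0)
  set G := Real.sqrt G2 with hG
  have hG0 : 0 ≤ G := Real.sqrt_nonneg _
  have hVG : ∀ r ∈ Icc 0 t, ∀ x, |V r x| ≤ G / γ := by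
    intro r hr x
    rw [le_div_iff₀ hγ]
    have := Real.abs_le_sqrt (hV2 r hr x)
    rw [abs_mul, abs_of_pos hγ] at this
    linarith
  have hDG : D ≤ G * t := by
    have : m ≤ M0 + G * t := by
      apply csSup_le ne
      rintro _ ⟨r, hr, x, rfl⟩
      refine (h.bound_evol hVG hM0 hr x).trans ?_
      have e : γ * (G / γ) = G := by field_simp
      rw [e, sub_zero]
      have := mul_le_mul_of_nonneg_left hr.2 hG0
      linarith
    linarith
  have hfin : D ≤ C * t + γ * Q / 6 * t ^ 2 := by
    apply oh_alg2 (by positivity) (by positivity)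
    intro hD0
    have k1 := pow_le_pow_left₀ hD0 hDG 2
    have k2 : (G * t) ^ 2 = G2 * t ^ 2 := by rw [mul_pow, hG, Real.sq_sqrt hG20]
    rw [k2, hG2] at k1
    have k3 : (C * t) ^ 2 = γ / 2 * z * t ^ 2 := by rw [mul_pow, hC2]
    rw [k3]
    linarith
  have := ub s hs x
  linarith

theorem line_sup_bound
    (γ T : ℝ) (hγ : 0 < γ) (u₀ : ℝ → ℝ) (u : ℝ → ℝ → ℝ)
    (hsol : IsLineOHSolution γ (Set.Ico 0 T) u) (h0 : u 0 = u₀)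
    (hu₀L1 : MeasureTheory.Integrable u₀)
    (hu₀L2 : MeasureTheory.Integrable (fun x => (u₀ x) ^ 2))
    (hu₀Linf : BddAbove (Set.range fun x => |u₀ x|))
    (hvL2 : ∀ t ∈ Set.Ico (0 : ℝ) T,
      MeasureTheory.Integrable (fun x => (∫ y in Set.Iic x, u t y) ^ 2))
    (hvdecay : ∀ t ∈ Set.Ico (0 : ℝ) T,
      Filter.Tendsto (fun x => ∫ y in Set.Iic x, u t y) Filter.atTop (nhds 0) ∧
      Filter.Tendsto (fun x => ∫ y in Set.Iic x, u t y) Filter.atBot (nhds 0))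
    (Q E C : ℝ)
    (hQ : Q = ∫ x : ℝ, (u₀ x) ^ 2)
    (hE : E = ∫ x : ℝ, (γ * (∫ y in Set.Iic x, u₀ y) ^ 2 + (1/3) * (u₀ x) ^ 3))
    (hC : C = Real.sqrt γ / Real.sqrt 2 *
      Real.sqrt (E + γ * Q + (1/3) * Q * (⨆ y : ℝ, |u₀ y|))) :
    ∀ t ∈ Set.Ico (0 : ℝ) T, ∀ s ∈ Set.Icc (0 : ℝ) t, ∀ x : ℝ,
      |u s x| ≤ (⨆ y : ℝ, |u₀ y|) + C * t + γ * Q / 6 * t ^ 2 := by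
  intro t ht s hs x
  subst h0
  have hM0 : ∀ x, |u 0 x| ≤ ⨆ y : ℝ, |u 0 y| := fun x => le_ciSup hu₀Linf x
  rcases eq_or_lt_of_le ht.1 with e | htpos
  · have hs0 : s = 0 := le_antisymm (by rw [e]; exact hs.2) hs.1
    rw [hs0, ← e]
    simpa using hM0 x
  have hd : OHData γ T u :=
    { hγ := hγ
      sol := hsol
      vL2 := hvL2
      vtop := fun t ht => (hvdecay t ht).1
      vbot := fun t ht => (hvdecay t ht).2 }
  have hT : 0 < T := htpos.trans ht.2
  have m0 : (0:ℝ) ∈ Icc 0 t := ⟨le_refl _, htpos.le⟩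
  obtain ⟨S, hS⟩ := hd.bdd hT
  have B := hd.build0 htpos.le ht.2
  have key := B.final htpos (S := max S (∫ y, |u 0 y|)) ?_ (M0 := ⨆ y : ℝ, |u 0 y|) ?_
    (Q := Q) (E := E) ?_ ?_ hs x
  · rw [hC]
    simpa only [ohcl_eq hs] using key
  · intro r hr x
    simp only [ohcl_eq hr]
    rcases eq_or_lt_of_le hr.1 with e | e
    · rw [← e]
      exact (hd.v_abs ⟨le_refl _, hT⟩ x).trans (le_max_right _ _)
    · exact (hS r ⟨e, hr.2.trans_lt ht.2⟩ x).trans (le_max_left _ _)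
  · simpa only [ohcl_eq m0] using hM0
  · simpa only [ohcl_eq m0] using hQ
  · simpa only [ohcl_eq m0, ohv] using hE
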